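/- Let d be an odd positive integer and let 𝒟 = {D₁, D₂} be partitions of d with ν(D₁) + ν(D₂) = d − 1 and ν(D₁) ≥ ν(D₂). If gcd(D₁) = 1, gcd(D₂) = 1, and 𝒟 ≠ {[2,…,2,1], [2,…,2,1]}, then there exist permutations α ∈ D₁, β ∈ D₂ of the d-element set and a permutation ω with ω² = αβ such that the group ⟨α, β, ω⟩ is transitive and primitive. -/

import Mathlib

/-- The cycle type of a permutation, including fixed points as parts equal to `1`. -/
def fullCycleType {Ω : Type*} [Fintype Ω] [DecidableEq Ω] (σ : Equiv.Perm Ω) : Multiset ℕ :=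
  σ.cycleType + Multiset.replicate (Fintype.card Ω - σ.support.card) 1

/-- A multiset of positive integers summing to `d`, i.e. a partition of `d`. -/
def IsPartitionOf (d : ℕ) (D : Multiset ℕ) : Prop :=
  (∀ x ∈ D, 0 < x) ∧ D.sum = d

/-- The defect `ν(D) = Σⱼ (dⱼ − 1)` of a partition. -/
def nu (D : Multiset ℕ) : ℕ := (D.map (· - 1)).sum

/-- The partition `[2,…,2,1]` of an odd number `d`, with `(d−1)/2` parts equal to `2`. -/
def twosAndOne (d : ℕ) : Multiset ℕ := Multiset.replicate ((d - 1) / 2) 2 + {1}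

/-- A subgroup of the symmetric group on `Ω` is transitive. -/
def SubgroupTransitive {Ω : Type*} (G : Subgroup (Equiv.Perm Ω)) : Prop :=
  ∀ x y : Ω, ∃ g ∈ G, g x = y

/-- `Λ` is a block for the subgroup `G` of the symmetric group on `Ω`. -/
def IsBlockOf {Ω : Type*} (G : Subgroup (Equiv.Perm Ω)) (Λ : Set Ω) : Prop :=
  Λ.Nonempty ∧ ∀ g ∈ G, (⇑g '' Λ = Λ ∨ Disjoint (⇑g '' Λ) Λ)

/-- A block is trivial if it is a singleton or the whole set. -/
def TrivialBlock {Ω : Type*} (Λ : Set Ω) : Prop :=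
  (∃ x, Λ = {x}) ∨ Λ = Set.univ

/-- A subgroup of the symmetric group is primitive: transitive with only trivial blocks. -/
def SubgroupPrimitive {Ω : Type*} (G : Subgroup (Equiv.Perm Ω)) : Prop :=
  SubgroupTransitive G ∧ ∀ Λ : Set Ω, IsBlockOf G Λ → TrivialBlock Λ

/-- A subgroup of the symmetric group is imprimitive: transitive but not primitive. -/
def SubgroupImprimitive {Ω : Type*} (G : Subgroup (Equiv.Perm Ω)) : Prop :=
  SubgroupTransitive G ∧ ¬ SubgroupPrimitive G

/-- The orbit of `x` under a subgroup `G` of the symmetric group on `Ω`. -/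
def orbSet {Ω : Type*} (G : Subgroup (Equiv.Perm Ω)) (x : Ω) : Set Ω :=
  {y | ∃ g ∈ G, g x = y}

/-- The number of orbits of a subgroup `G` of the symmetric group on `Ω`. -/
noncomputable def numOrbits {Ω : Type*} (G : Subgroup (Equiv.Perm Ω)) : ℕ :=
  Nat.card (Set.range (orbSet G))

/-!
Take a plane tree with `d` edges whose black and white vertices have the degrees `D₁` and `D₂`. The
rotations `α`, `β` of the edges about the black and the white vertices have these cycle types, and
numbering the edges along the contour of the tree makes `α * β` the translation `x ↦ x + 1` of
`ZMod d`. As `d` is odd, `α * β` is the square of one of its powers; as `⟨α, β⟩` contains all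
translations, its blocks are the cosets of the subgroups `k ZMod d` with `k ∣ d`.

Choose the tree to be a caterpillar with the degrees decreasing along the spine. If the cosets of
`k ZMod d` are blocks with `1 < k < d`, then `3 * k ≤ d`, and `β` induces a permutation `f` of
`ZMod k`. Comparing the cycles of `β` at the first vertices of the spine with their images in
`ZMod k` leaves two options. Either `f x = x + 1`, and then `k` divides the length of every cycle of
`β`; or `f x ≡ x` modulo some divisor `y > 1` of `k`, so that `α` is `x ↦ x + 1` modulo `y`, and
then `y` divides the length of every cycle of `α`. Both contradict the gcd hypotheses.
-/

/-! ### Multisets and cycle types -/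

theorem exists_antitone_range_map_eq (M : Multiset ℕ) :
    ∃ f : ℕ → ℕ, Antitone f ∧ (Multiset.range M.card).map f = M := by
  have hsort : (M.sort (· ≥ ·)).Pairwise (· ≥ ·) := M.pairwise_sort _
  have hlen : (M.sort (· ≥ ·)).length = M.card := M.length_sort (r := (· ≥ ·))
  refine ⟨fun i => (M.sort (· ≥ ·)).getD i 0, antitone_nat_of_succ_le fun i => ?_, ?_⟩
  · rcases lt_or_ge (i + 1) (M.sort (· ≥ ·)).length with hi | hi
    · simpa only [List.getD_eq_getElem _ _ hi, List.getD_eq_getElem _ _ (Nat.lt_of_succ_lt hi)]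
        using List.pairwise_iff_getElem.1 hsort i (i + 1) _ hi i.lt_succ_self
    · exact (List.getD_eq_default _ _ hi).trans_le (Nat.zero_le _)
  · conv_rhs => rw [← M.sort_eq (· ≥ ·)]
    rw [← hlen, ← Multiset.coe_range, Multiset.map_coe]
    congr 1
    refine List.ext_getElem (by simp) fun i h₁ h₂ => ?_
    simp [List.getElem?_eq_getElem h₂]

theorem univ_fin_val_map {X : Type*} (n : ℕ) (f : ℕ → X) :
    (Finset.univ : Finset (Fin n)).val.map (fun i : Fin n => f i) = (Multiset.range n).map f := by
  rw [Fin.univ_val_map, ← Multiset.coe_range, Multiset.map_coe, ← List.map_coe_finRange_eq_range,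
    List.map_map, List.ofFn_eq_map]
  rfl

theorem map_count_filter_range (p : ℕ → Prop) [DecidablePred p] (n : ℕ) :
    ((Multiset.range n).filter p).map (Nat.count p) = Multiset.range (Nat.count p n) := by
  induction n with
  | zero => simp
  | succ n ih => by_cases h : p n <;> simp [Multiset.range_succ, Nat.count_succ, h, ih]

theorem filter_two_le_add_replicate_one {D : Multiset ℕ} (hpos : ∀ x ∈ D, 0 < x) :
    D.filter (2 ≤ ·) + Multiset.replicate (D.sum - (D.filter (2 ≤ ·)).sum) 1 = D := by
  have hones : D.filter (fun x => ¬ 2 ≤ x)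
      = Multiset.replicate (D.filter (fun x => ¬ 2 ≤ x)).card 1 := by
    refine Multiset.eq_replicate_card.2 fun x hx => ?_
    have := hpos x (Multiset.mem_of_mem_filter hx)
    have := Multiset.of_mem_filter hx
    omega
  have hsplit := Multiset.filter_add_not (2 ≤ ·) D
  have hsum := congrArg Multiset.sum hsplit
  rw [Multiset.sum_add, hones, Multiset.sum_replicate, smul_eq_mul, mul_one] at hsum
  rw [← hsum, Nat.add_sub_cancel_left, ← hones, hsplit]

section CycleType

open Equiv Equiv.Perm

variable {X Y : Type*} [Fintype X] [DecidableEq X] [Fintype Y] [DecidableEq Y]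

theorem fullCycleType_eq_of_cycleType_eq {σ : Perm X} {D : Multiset ℕ} (hpos : ∀ x ∈ D, 0 < x)
    (hsum : D.sum = Fintype.card X) (hσ : σ.cycleType = D.filter (2 ≤ ·)) :
    fullCycleType σ = D := by
  conv_rhs => rw [← filter_two_le_add_replicate_one hpos]
  rw [fullCycleType, ← sum_cycleType, hσ, hsum]

theorem fullCycleType_inv (σ : Perm X) : fullCycleType σ⁻¹ = fullCycleType σ := by
  rw [fullCycleType, fullCycleType, cycleType_inv, support_inv]

theorem exists_pow_apply_eq_self_of_mem_fullCycleType {σ : Perm X} {p : ℕ}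
    (hp : p ∈ fullCycleType σ) : ∃ x, (σ ^ p) x = x := by
  rcases Multiset.mem_add.1 hp with hp | hp
  · obtain ⟨c, τ, rfl, hdisj, hc, rfl⟩ := mem_cycleType_iff.1 hp
    obtain ⟨x, hx⟩ := hc.nonempty_support
    refine ⟨x, ?_⟩
    have hτ : τ x = x := (hdisj x).resolve_left (mem_support.1 hx)
    rw [hdisj.commute.mul_pow, ← hc.orderOf, pow_orderOf_eq_one, one_mul]
    exact pow_apply_eq_self_of_apply_eq_self hτ _
  · obtain ⟨hcard, rfl⟩ := Multiset.mem_replicate.1 hp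
    have hlt : σ.support.card < Fintype.card X := by omega
    obtain ⟨x, hx⟩ := Finset.exists_mem_notMem_of_card_lt_card
      (hlt.trans_eq Finset.card_univ.symm)
    exact ⟨x, by simpa using hx.2⟩

theorem dvd_gcd_fullCycleType {σ : Perm X} {k : ℕ} (g : X → ZMod k)
    (hg : ∀ x, g (σ x) = g x + 1) : k ∣ (fullCycleType σ).gcd := by
  refine Multiset.dvd_gcd.2 fun p hp => ?_
  obtain ⟨x, hx⟩ := exists_pow_apply_eq_self_of_mem_fullCycleType hp
  have hpow : ∀ m : ℕ, g ((σ ^ m) x) = g x + m := fun m => by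
    induction m with
    | zero => simp
    | succ m ih => rw [pow_succ', Perm.mul_apply, hg, ih, Nat.cast_succ, add_assoc]
  rw [← ZMod.natCast_eq_zero_iff]
  exact left_eq_add.1 ((congrArg g hx).symm.trans (hpow p))

theorem cycleType_eq_of_semiconj (f : Y ↪ X) {σ : Perm X} {τ : Perm Y}
    (hστ : ∀ y, σ (f y) = f (τ y)) (hfix : ∀ x ∉ Set.range f, σ x = x) :
    σ.cycleType = τ.cycleType := by
  have hσ : σ = τ.viaFintypeEmbedding f := by
    ext x
    by_cases hx : x ∈ Set.range f
    · obtain ⟨y, rfl⟩ := hx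
      rw [hστ, viaFintypeEmbedding_apply_image]
    · rw [hfix x hx, viaFintypeEmbedding_apply_notMem_range _ _ hx]
  rw [hσ]
  exact cycleType_extendDomain f.toEquivRange

theorem fullCycleType_eq_of_semiconj (e : Y ≃ X) {σ : Perm X} {τ : Perm Y}
    (hστ : ∀ y, σ (e y) = e (τ y)) : fullCycleType σ = fullCycleType τ := by
  rw [fullCycleType, fullCycleType, ← sum_cycleType, ← sum_cycleType, Fintype.card_congr e,
    cycleType_eq_of_semiconj e.toEmbedding hστ fun x hx => (hx (e.surjective x)).elim]

theorem cycleType_sigmaCongrRight {ι : Type*} [Fintype ι] [DecidableEq ι] {Z : ι → Type*}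
    [∀ i, Fintype (Z i)] [∀ i, DecidableEq (Z i)] (τ : ∀ i, Perm (Z i)) :
    (Perm.sigmaCongrRight τ).cycleType = ∑ i, (τ i).cycleType := by
  have hsingle : ∀ i, (sigmaCongrRightHom Z (Pi.mulSingle i (τ i))).cycleType
      = (τ i).cycleType := fun i => by
    refine cycleType_eq_of_semiconj (Function.Embedding.sigmaMk i) (fun z => ?_) ?_
    · simp [Perm.sigmaCongrRight]
    · rintro ⟨j, z⟩ hz
      have hji : j ≠ i := by rintro rfl; exact hz ⟨z, rfl⟩
      simp [Perm.sigmaCongrRight, hji]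
  have hdisj : Pairwise fun i j => Disjoint (sigmaCongrRightHom Z (Pi.mulSingle i (τ i)))
      (sigmaCongrRightHom Z (Pi.mulSingle j (τ j))) := by
    rintro i j hij ⟨l, z⟩
    rcases eq_or_ne l i with rfl | hl
    · exact Or.inr (by simp [hij])
    · exact Or.inl (by simp [hl])
  have hprod := (Finset.map_noncommProd Finset.univ (fun i => Pi.mulSingle i (τ i))
    (fun i _ j _ _ => Pi.mulSingle_apply_commute τ i j) (sigmaCongrRightHom Z)).symm.trans
    (congrArg (sigmaCongrRightHom Z) (Finset.noncommProd_mulSingle τ))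
  calc (Perm.sigmaCongrRight τ).cycleType
      = ∑ i, (sigmaCongrRightHom Z (Pi.mulSingle i (τ i))).cycleType :=
        (congrArg cycleType hprod).symm.trans
          (Disjoint.cycleType_noncommProd (hdisj.set_pairwise _))
    _ = ∑ i, (τ i).cycleType := Finset.sum_congr rfl fun i _ => hsingle i

theorem cycleType_finRotate_eq_filter (n : ℕ) :
    (finRotate n).cycleType = ({n} : Multiset ℕ).filter (2 ≤ ·) := by
  match n with
  | 0 => rfl
  | 1 => rfl
  | n + 2 => rw [cycleType_finRotate, Multiset.filter_singleton, if_pos (by omega)]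

theorem cycleType_sigmaCongrRight_finRotate {ι : Type*} [Fintype ι] [DecidableEq ι]
    (m : ι → ℕ) : (Perm.sigmaCongrRight fun i => finRotate (m i)).cycleType
      = (Finset.univ.val.map m).filter (2 ≤ ·) := by
  simp only [cycleType_sigmaCongrRight, cycleType_finRotate_eq_filter]
  induction Finset.univ (α := ι) using Finset.induction_on with
  | empty => rfl
  | insert i s hi ih =>
    rw [Finset.sum_insert hi, ih, Finset.insert_val_of_notMem hi, Multiset.map_cons,
      ← Multiset.singleton_add, Multiset.filter_add]

theorem coe_finRotate_eq_mod {n : ℕ} (r : Fin n) : (finRotate n r : ℕ) = (r + 1) % n := by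
  have := r.neZero
  rw [finRotate_apply, Fin.val_add, Fin.val_one', Nat.add_mod_mod]

theorem cycleType_eq_of_cycles {ι : Type*} [Fintype ι] (m : ι → ℕ) (x : ι → ℕ → X)
    (hx : Function.Injective fun p : Σ i, Fin (m i) => x p.1 p.2) {σ : Perm X}
    (hσ : ∀ i, ∀ r < m i, σ (x i r) = x i ((r + 1) % m i))
    (hfix : ∀ y, (∀ i, ∀ r < m i, x i r ≠ y) → σ y = y) :
    σ.cycleType = (Finset.univ.val.map m).filter (2 ≤ ·) := by
  classical
  rw [← cycleType_sigmaCongrRight_finRotate]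
  refine cycleType_eq_of_semiconj ⟨_, hx⟩ (fun p => ?_)
    fun y hy => hfix y fun i r hr h => hy ⟨⟨i, r, hr⟩, h⟩
  exact (hσ p.1 p.2 p.2.2).trans (congrArg (x p.1) (coe_finRotate_eq_mod p.2).symm)

end CycleType

open Equiv Equiv.Perm in
theorem exists_perm_of_cycles {X ι : Type*} [Finite ι] (m : ι → ℕ) (x : ι → ℕ → X)
    (hx : Function.Injective fun p : Σ i, Fin (m i) => x p.1 p.2) :
    ∃ σ : Perm X, (∀ i, ∀ r < m i, σ (x i r) = x i ((r + 1) % m i)) ∧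
      ∀ y, (∀ i, ∀ r < m i, x i r ≠ y) → σ y = y := by
  classical
  have := Fintype.ofFinite ι
  refine ⟨(Perm.sigmaCongrRight fun i => finRotate (m i)).viaFintypeEmbedding ⟨_, hx⟩,
    fun i r hr => ?_, fun y hy => ?_⟩
  · have happly := viaFintypeEmbedding_apply_image
      (Perm.sigmaCongrRight fun i => finRotate (m i)) ⟨_, hx⟩ ⟨i, r, hr⟩
    exact happly.trans (congrArg (x i) (coe_finRotate_eq_mod ⟨r, hr⟩))
  · refine viaFintypeEmbedding_apply_notMem_range _ _ ?_
    rintro ⟨p, hp⟩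
    exact hy p.1 p.2 p.2.2 hp

/-! ### Caterpillars and their white rotation -/

theorem exists_lt_le_succ {f : ℕ → ℕ} {m x : ℕ} (h0 : f 0 < x) (hm : x ≤ f m) :
    ∃ i < m, f i < x ∧ x ≤ f (i + 1) := by
  induction m with
  | zero => exact absurd hm h0.not_ge
  | succ m ih =>
    rcases lt_or_ge (f m) x with hlt | hge
    · exact ⟨m, m.lt_succ_self, hlt, hm⟩
    · obtain ⟨i, hi, h⟩ := ih hge
      exact ⟨i, hi.trans m.lt_succ_self, h⟩

theorem eq_of_natCast_zmod_eq {k a b : ℕ} (h : (a : ZMod k) = b) (hab : a < b + k)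
    (hba : b < a + k) : a = b := by
  have hdvd : (k : ℤ) ∣ b - a := (ZMod.natCast_eq_natCast_iff a b k).1 h |>.dvd
  have := Int.eq_zero_of_abs_lt_dvd hdvd (by rw [abs_lt]; omega)
  omega

theorem natCast_zmod_ne_zero {k x : ℕ} (h0 : 0 < x) (hx : x < k) : (x : ZMod k) ≠ 0 := fun h =>
  Nat.not_dvd_of_pos_of_lt h0 hx ((ZMod.natCast_eq_zero_iff x k).1 h)

theorem natCast_zmod_eq_neg {k a b : ℕ} (h : a + b = k) : (a : ZMod k) = -b := by
  rw [eq_neg_iff_add_eq_zero, ← Nat.cast_add, h, ZMod.natCast_self]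

theorem exists_natCast_zmod_eq {k : ℕ} [NeZero k] (a : ℕ) (z : ZMod k) :
    ∃ x, a ≤ x ∧ x < a + k ∧ (x : ZMod k) = z :=
  ⟨a + (z - a).val, by omega, by have := (z - a).val_lt; omega, by
    rw [Nat.cast_add, ZMod.natCast_rightInverse, add_sub_cancel]⟩

theorem apply_eq_self_of_forall_ne {X : Type*} {f : X → X} (hf : Function.Injective f) {a : X}
    (h : ∀ x, x ≠ a → f x = x) (x : X) : f x = x := by
  by_contra hx
  obtain rfl : x = a := not_imp_comm.1 (h x) hx
  exact hx (hf (h _ hx))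

theorem count_mem_range_succ {v : ℕ → ℕ} (hv : StrictMono v)
    [DecidablePred (· ∈ Set.range fun j => v (j + 1))] (n : ℕ) :
    Nat.count (· ∈ Set.range fun j => v (j + 1)) (v n + 1) = n := by
  have himage : (Finset.range (v n + 1)).filter (· ∈ Set.range fun j => v (j + 1))
      = (Finset.range n).image fun j => v (j + 1) := by
    ext x
    simp only [Finset.mem_filter, Finset.mem_range, Nat.lt_succ_iff, Set.mem_range,
      Finset.mem_image]
    constructor
    · rintro ⟨hx, j, rfl⟩
      exact ⟨j, hv.le_iff_le.1 hx, rfl⟩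
    · rintro ⟨j, hj, rfl⟩
      exact ⟨hv.monotone hj, j, rfl⟩
  have hinj : Function.Injective fun j => v (j + 1) := hv.injective.comp Nat.succ_injective
  rw [Nat.count_eq_card_filter_range, himage, Finset.card_image_of_injective _ hinj,
    Finset.card_range]

theorem sum_sub_add_ite {E : ℕ → ℕ} (hE : Monotone E) (hE0 : E 0 = 0) (p : ℕ → Prop)
    [DecidablePred p] (n : ℕ) :
    ∑ i ∈ Finset.range n, (E (i + 1) - E i + if p i then 1 else 0) = E n + Nat.count p n := by
  rw [Finset.sum_add_distrib, Finset.sum_range_tsub hE, hE0, Nat.sub_zero, ← Finset.card_filter,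
    Nat.count_eq_card_filter_range]

/-- A plane caterpillar with `d` edges whose vertices are coloured black and white.

The `j`-th non-leaf white vertex, `j < s`, is adjacent to the black vertices `v j, …, v (j + 1)`;
all other white vertices are leaves, and the black vertices are numbered `0, …, v s`. The edges form
`ZMod d`, numbered along the contour of the tree, so that the rotations `α` about the black and `β`
about the white vertices satisfy `α (β x) = x + 1`. The edge from the `j`-th white vertex to the
black vertex `v (j + 1)` is `-j`; the other edges at the black vertex `i` are
`E i + 1, …, E (i + 1)`.

The fields `v_concave` and `step_antitone` say that the degrees of the white vertices and of the
black vertices off the spine decrease. For convenience `v` and `E` are defined on all of `ℕ`, but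
only `v 0, …, v s` and `E 0, …, E (v s + 1)` describe the tree. -/
structure Caterpillar (d : ℕ) where
  s : ℕ
  v : ℕ → ℕ
  E : ℕ → ℕ
  s_pos : 0 < s
  v_zero : v 0 = 0
  v_strictMono : StrictMono v
  two_le_v_one : 2 ≤ v 1
  v_concave : Antitone fun j => v (j + 1) - v j
  E_zero : E 0 = 0
  E_mono : Monotone E
  E_strictMonoOn : StrictMonoOn E (Set.Iic (v s))
  E_last : E (v s + 1) + s = d
  step_antitone : ∀ i i', i ≤ i' → i' < v s → i ∉ Set.range (fun j => v (j + 1)) →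
    i' ∉ Set.range (fun j => v (j + 1)) → E (i' + 1) - E i' ≤ E (i + 1) - E i

namespace Caterpillar

variable {d : ℕ} (C : Caterpillar d)

/-- The indices `v 1, …, v s` of the black vertices that carry one of the edges `-j`, `j < s`. -/
def spine : Set ℕ := Set.range fun j => C.v (j + 1)

/-- The degree of the `j`-th non-leaf white vertex. -/
def whiteDegree (j : ℕ) : ℕ := C.v (j + 1) - C.v j + 1

theorem v_lt_succ (j : ℕ) : C.v j < C.v (j + 1) := C.v_strictMono j.lt_succ_self

theorem v_one_pos : 0 < C.v 1 := two_pos.trans_le C.two_le_v_one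

theorem v_one_le : C.v 1 ≤ C.v C.s := C.v_strictMono.monotone C.s_pos

theorem v_succ_le {j l : ℕ} (h : j < l) : C.v (j + 1) ≤ C.v l := C.v_strictMono.monotone h

theorem notMem_spine {j i : ℕ} (hi : C.v j < i) (hi' : i < C.v (j + 1)) : i ∉ C.spine := by
  rintro ⟨l, rfl⟩
  have := C.v_strictMono.lt_iff_lt.1 hi
  have := C.v_strictMono.lt_iff_lt.1 hi'
  omega

theorem notMem_spine_of_lt {i : ℕ} (hi : i < C.v 1) : i ∉ C.spine := by
  rintro ⟨l, rfl⟩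
  have := C.v_strictMono.lt_iff_lt.1 hi
  omega

theorem exists_v_lt_le {i : ℕ} (hi : 0 < i) (hi' : i ≤ C.v C.s) :
    ∃ j < C.s, C.v j < i ∧ i ≤ C.v (j + 1) :=
  exists_lt_le_succ (by rwa [C.v_zero]) hi'

theorem whiteDegree_antitone : Antitone C.whiteDegree := fun _ _ h =>
  Nat.succ_le_succ (C.v_concave h)

theorem whiteDegree_zero : C.whiteDegree 0 = C.v 1 + 1 := by
  rw [whiteDegree, C.v_zero, Nat.sub_zero]

theorem v_eq_mul_of_whiteDegree_eq {j : ℕ} (hj : C.whiteDegree j = C.whiteDegree 0) {l : ℕ}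
    (hl : l ≤ j + 1) : C.v l = l * C.v 1 := by
  induction l with
  | zero => rw [C.v_zero, zero_mul]
  | succ l ih =>
    have h1 := C.whiteDegree_antitone (show l ≤ j by omega)
    have h2 := C.whiteDegree_antitone (Nat.zero_le l)
    have hlt := C.v_lt_succ l
    rw [hj, C.whiteDegree_zero] at h1
    rw [C.whiteDegree_zero] at h2
    unfold whiteDegree at h1 h2
    rw [Nat.succ_mul, ← ih (by omega)]
    omega

theorem E_lt_E {i i' : ℕ} (h : i < i') (hi' : i' ≤ C.v C.s) : C.E i < C.E i' :=
  C.E_strictMonoOn (h.le.trans hi') hi' h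

theorem E_pos {i : ℕ} (hi : 0 < i) (hi' : i ≤ C.v C.s) : 0 < C.E i :=
  C.E_zero.symm.trans_lt (C.E_lt_E hi hi')

theorem E_injOn : Set.InjOn C.E (Set.Iic (C.v C.s)) := C.E_strictMonoOn.injOn

theorem E_one_pos : 0 < C.E 1 := C.E_pos one_pos (C.v_one_pos.trans_le C.v_one_le)

theorem E_add_le {i m : ℕ} (h : i + m ≤ C.v C.s) : C.E i + m ≤ C.E (i + m) := by
  induction m with
  | zero => rfl
  | succ m ih =>
    have := ih (by omega)
    have := C.E_lt_E (Nat.lt_add_one (i + m)) h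
    change _ ≤ C.E (i + m + 1)
    omega

theorem ne_E_of_lt_of_lt {i x : ℕ} (hx : C.E i < x) (hx' : x < C.E (i + 1)) (l : ℕ) :
    x ≠ C.E l := by
  rintro rfl
  rcases Nat.lt_or_ge i l with h | h
  · exact hx'.not_ge (C.E_mono h)
  · exact hx.not_ge (C.E_mono h)

theorem E_eq_mul_of_le_step {i' : ℕ} (hi' : i' < C.v C.s) (hspine : i' ∉ C.spine)
    (hstep : C.E 1 ≤ C.E (i' + 1) - C.E i') {i : ℕ} (hi : i ≤ i' + 1) (hi1 : i ≤ C.v 1) :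
    C.E i = i * C.E 1 := by
  induction i with
  | zero => rw [C.E_zero, zero_mul]
  | succ i ih =>
    have h1 := C.step_antitone i i' (by omega) hi' (C.notMem_spine_of_lt hi1) hspine
    have h2 := C.step_antitone 0 i (by omega) (by omega)
      (C.notMem_spine_of_lt (by omega)) (C.notMem_spine_of_lt hi1)
    have h3 := C.E_mono (Nat.le_add_right i 1)
    rw [C.E_zero, zero_add, Nat.sub_zero] at h2
    have h4 := ih (by omega) (by omega)
    rw [Nat.add_mul, Nat.one_mul]
    omega

theorem v_add_le (j m : ℕ) : C.v j + m ≤ C.v (j + m) := by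
  simpa [add_comm] using C.v_strictMono.add_le_nat m j

theorem s_lt_v_s : C.s < C.v C.s := by
  have := C.v_add_le 1 (C.s - 1)
  have := C.s_pos
  have := C.two_le_v_one
  rw [Nat.add_sub_cancel' C.s_pos] at *
  omega

theorem le_E_last {k : ℕ} (hk : 3 * k ≤ d) : k ≤ C.E (C.v C.s + 1) := by
  have := C.E_add_le (i := 0) (m := C.v C.s) (by omega)
  have := C.E_mono (Nat.le_add_right (C.v C.s) 1)
  have := C.s_lt_v_s
  have := C.E_last
  rw [Nat.zero_add] at *
  omega

theorem E_one_lt {k : ℕ} (hstep : ∀ i ≤ C.v C.s, C.E (i + 1) < C.E i + k) : C.E 1 < k := by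
  simpa [C.E_zero] using hstep 0 (Nat.zero_le _)

theorem E_one_ne_zero {k : ℕ} (hstep : ∀ i ≤ C.v C.s, C.E (i + 1) < C.E i + k) :
    (C.E 1 : ZMod k) ≠ 0 :=
  natCast_zmod_ne_zero C.E_one_pos (C.E_one_lt hstep)

/-- `f` is the rotation about the white vertices, read modulo `k`: the cycle at the `j`-th white
vertex is `(-j, E (v j + 1), …, E (v (j + 1)))` and all remaining edges are fixed. For `k = d` this
is the rotation itself; for `k ∣ d` it is the map that the rotation induces on a system of
blocks. -/
structure IsWhiteMap {k : ℕ} (f : ZMod k → ZMod k) : Prop where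
  first : ∀ j < C.s, f (-j) = C.E (C.v j + 1)
  step : ∀ j < C.s, ∀ i, C.v j < i → i < C.v (j + 1) → f (C.E i) = C.E (i + 1)
  last : ∀ j < C.s, f (C.E (C.v (j + 1))) = -j
  fixed : ∀ x, 0 < x → x ≤ C.E (C.v C.s + 1) → (∀ i ≤ C.v C.s, x ≠ C.E i) → f x = x

namespace IsWhiteMap

variable {C} {k : ℕ} {f : ZMod k → ZMod k} (hf : C.IsWhiteMap f)

include hf

theorem apply_natCast_of_lt_of_lt {i x : ℕ} (hi : i ≤ C.v C.s) (hx : C.E i < x)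
    (hx' : x < C.E (i + 1)) : f x = x :=
  hf.fixed x (by omega) (hx'.le.trans (C.E_mono (by omega))) fun l _ => C.ne_E_of_lt_of_lt hx hx' l

theorem iterate_neg {j : ℕ} (hj : j < C.s) {r : ℕ} (hr : C.v j + r < C.v (j + 1)) :
    f^[r + 1] (-j) = C.E (C.v j + r + 1) := by
  induction r with
  | zero => exact hf.first j hj
  | succ r ih =>
    rw [Function.iterate_succ_apply', ih (by omega)]
    exact hf.step j hj _ (by omega) (by omega)

theorem iterate_zero {i : ℕ} (hi : i ≤ C.v 1) : f^[i] 0 = C.E i := by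
  rcases i with _ | i
  · simp [C.E_zero]
  · simpa [C.v_zero] using hf.iterate_neg C.s_pos (r := i) (by rwa [C.v_zero, zero_add])

theorem apply_E_of_lt_v_one {i : ℕ} (hi : i < C.v 1) : f (C.E i) = C.E (i + 1) := by
  rw [← hf.iterate_zero hi.le, ← hf.iterate_zero hi, Function.iterate_succ_apply']

theorem apply_zero : f 0 = C.E 1 := by
  simpa [C.E_zero] using hf.apply_E_of_lt_v_one C.v_one_pos

theorem apply_E_v_one : f (C.E (C.v 1)) = 0 := by
  simpa using hf.last 0 C.s_pos

theorem isPeriodicPt_neg {j : ℕ} (hj : j < C.s) :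
    Function.IsPeriodicPt f (C.whiteDegree j) (-j : ZMod k) := by
  have hv := C.v_lt_succ j
  have hiter := hf.iterate_neg hj (r := C.v (j + 1) - C.v j - 1) (by omega)
  rw [show C.v (j + 1) - C.v j - 1 + 1 = C.v (j + 1) - C.v j by omega,
    show C.v j + (C.v (j + 1) - C.v j - 1) + 1 = C.v (j + 1) by omega] at hiter
  rw [Function.IsPeriodicPt, Function.IsFixedPt, whiteDegree, Function.iterate_succ_apply', hiter,
    hf.last j hj]

theorem isPeriodicPt_E {j i : ℕ} (hj : j < C.s) (hi : C.v j < i) (hi' : i ≤ C.v (j + 1)) :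
    Function.IsPeriodicPt f (C.whiteDegree j) (C.E i : ZMod k) := by
  have hiter := hf.iterate_neg hj (r := i - C.v j - 1) (by omega)
  rw [show C.v j + (i - C.v j - 1) + 1 = i by omega] at hiter
  rw [← hiter]
  exact (hf.isPeriodicPt_neg hj).apply_iterate _

theorem exists_E_eq_of_natCast_eq_zero (h1 : (C.E 1 : ZMod k) ≠ 0) {x : ℕ} (hx : 0 < x)
    (hx' : x ≤ C.E (C.v C.s + 1)) (hx0 : (x : ZMod k) = 0) :
    ∃ j < C.s, ∃ i, C.v j < i ∧ i ≤ C.v (j + 1) ∧ C.E i = x := by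
  by_contra! hne
  refine h1 (hf.apply_zero.symm.trans ?_)
  rw [← hx0]
  refine hf.fixed x hx hx' ?_
  rintro i hi rfl
  have hi0 : i ≠ 0 := by rintro rfl; exact hx.ne' C.E_zero
  obtain ⟨j, hj, hji, hij⟩ := C.exists_v_lt_le (Nat.pos_of_ne_zero hi0) hi
  exact hne j hj i hji hij rfl

theorem apply_natCast_of_E_eq_mul {e : ℕ} (he : e < C.v 1)
    (hmul : ∀ i ≤ e + 1, C.E i = i * C.E 1) {x : ℕ} (hx : x ≤ C.E e) :
    f x = if C.E 1 ∣ x then (x + C.E 1 : ZMod k) else x := by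
  have heN : e ≤ C.v C.s := he.le.trans C.v_one_le
  split_ifs with hdvd
  · obtain ⟨i, rfl⟩ := hdvd
    have hie : i ≤ e := Nat.le_of_mul_le_mul_left
      (by rwa [mul_comm (C.E 1) e, ← hmul e e.le_succ]) C.E_one_pos
    have happly := hf.apply_E_of_lt_v_one (hie.trans_lt he)
    rw [hmul i (by omega), hmul (i + 1) (by omega)] at happly
    rw [mul_comm (C.E 1) i, happly, Nat.succ_mul, Nat.cast_add]
  · have hx0 : 0 < x := Nat.pos_of_ne_zero (by rintro rfl; exact hdvd (dvd_zero _))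
    refine hf.fixed x hx0 (hx.trans (C.E_mono (by omega))) ?_
    rintro i hi rfl
    have hie : i ≤ e := (C.E_strictMonoOn.le_iff_le hi heN).1 hx
    exact hdvd ⟨i, by rw [hmul i (by omega), mul_comm]⟩

theorem apply_eq_self_of_le_step [NeZero k] (hinj : Function.Injective f) {i : ℕ}
    (hi : i ≤ C.v C.s) (hstep : C.E i + k ≤ C.E (i + 1)) (z : ZMod k) : f z = z := by
  -- Every other residue class has a representative strictly between `E i` and `E (i + 1)`.
  refine apply_eq_self_of_forall_ne hinj (a := (C.E i : ZMod k)) (fun z hz => ?_) z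
  obtain ⟨x, hx, hxk, rfl⟩ := exists_natCast_zmod_eq (C.E i) z
  refine hf.apply_natCast_of_lt_of_lt hi (lt_of_le_of_ne hx ?_) (hxk.trans_le hstep)
  rintro rfl
  exact hz rfl

theorem E_succ_eq_add_E_one (hstep : ∀ i ≤ C.v C.s, C.E (i + 1) < C.E i + k)
    {i : ℕ} (hi : i < C.v C.s) (hE : (C.E i : ZMod k) = 0) (happly : f (C.E i) = C.E (i + 1)) :
    C.E (i + 1) = C.E i + C.E 1 := by
  have hlt := C.E_lt_E (Nat.lt_add_one i) hi
  have hi_step := hstep i hi.le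
  have h1 := C.E_one_lt hstep
  refine eq_of_natCast_zmod_eq (k := k) ?_ (by omega) (by omega)
  rw [Nat.cast_add, hE, zero_add, ← hf.apply_zero, ← happly, hE]

theorem E_eq_mul_of_E_eq_zero (hstep : ∀ i ≤ C.v C.s, C.E (i + 1) < C.E i + k)
    {e : ℕ} (he1 : e ≤ C.v 1) (hE : (C.E e : ZMod k) = 0) :
    e < C.v 1 ∧ ∀ i ≤ e + 1, C.E i = i * C.E 1 := by
  have he_lt : e < C.v 1 := by
    refine lt_of_le_of_ne he1 ?_
    rintro rfl
    refine C.E_one_ne_zero hstep ?_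
    rw [← hf.apply_zero, ← hE, hf.apply_E_v_one, hE]
  have heN : e < C.v C.s := he_lt.trans_le C.v_one_le
  have hstep_e := hf.E_succ_eq_add_E_one hstep heN hE (hf.apply_E_of_lt_v_one he_lt)
  exact ⟨he_lt, fun i hi => C.E_eq_mul_of_le_step heN (C.notMem_spine_of_lt he_lt) (by omega) hi
    (by omega)⟩

theorem congr_or_eq_add_one_of_E_eq_zero
    (hstep : ∀ i ≤ C.v C.s, C.E (i + 1) < C.E i + k) {e : ℕ} (he : 0 < e) (he1 : e ≤ C.v 1)
    (hE : (C.E e : ZMod k) = 0) :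
    (∃ y, ∃ hy : y ∣ k, 1 < y ∧
      ∀ z, ZMod.castHom hy (ZMod y) (f z) = ZMod.castHom hy (ZMod y) z) ∨ ∀ z, f z = z + 1 := by
  obtain ⟨he_lt, hmul⟩ := hf.E_eq_mul_of_E_eq_zero hstep he1 hE
  have hE1k := C.E_one_lt hstep
  have : NeZero k := ⟨by omega⟩
  have hke : k ≤ C.E e := Nat.le_of_dvd (C.E_pos he (he1.trans C.v_one_le))
    ((ZMod.natCast_eq_zero_iff _ _).1 hE)
  have happly : ∀ x ≤ k, f x = if C.E 1 ∣ x then (x + C.E 1 : ZMod k) else x := fun x hx =>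
    hf.apply_natCast_of_E_eq_mul he_lt hmul (hx.trans hke)
  have hdvd : C.E 1 ∣ k := by
    by_contra hndvd
    have hk := happly k le_rfl
    rw [if_neg hndvd, ZMod.natCast_self, hf.apply_zero] at hk
    exact C.E_one_ne_zero hstep hk
  have hE1 : 1 ≤ C.E 1 := C.E_one_pos
  rcases hE1.eq_or_lt with h1 | h1
  · refine Or.inr fun z => ?_
    obtain ⟨x, -, hx, rfl⟩ := exists_natCast_zmod_eq 0 z
    rw [happly x (by omega), ← h1, if_pos (one_dvd x), Nat.cast_one]
  · refine Or.inl ⟨C.E 1, hdvd, h1, fun z => ?_⟩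
    obtain ⟨x, -, hx, rfl⟩ := exists_natCast_zmod_eq 0 z
    rw [happly x (by omega)]
    split_ifs <;> simp [map_add, -ZMod.castHom_apply]

theorem E_v_one_lt (hstep : ∀ i ≤ C.v C.s, C.E (i + 1) < C.E i + k)
    (hne : ∀ i, 0 < i → i ≤ C.v 1 → (C.E i : ZMod k) ≠ 0) : C.E (C.v 1) < k := by
  by_contra! hk
  have hk0 : C.E 0 < k := by have := C.E_one_lt hstep; rw [C.E_zero]; omega
  obtain ⟨i, hi, hik, hki⟩ := exists_lt_le_succ hk0 hk
  have hki' : k < C.E (i + 1) := lt_of_le_of_ne hki fun h =>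
    hne (i + 1) i.succ_pos hi (by rw [← h, ZMod.natCast_self])
  have hfk := hf.apply_natCast_of_lt_of_lt (hi.le.trans C.v_one_le) hik hki'
  rw [ZMod.natCast_self, hf.apply_zero] at hfk
  exact C.E_one_ne_zero hstep hfk

theorem whiteDegree_zero_dvd (hne : ∀ i, 0 < i → i ≤ C.v 1 → (C.E i : ZMod k) ≠ 0)
    {m : ℕ} (hm : Function.IsPeriodicPt f m 0) : C.whiteDegree 0 ∣ m := by
  have hper : Function.IsPeriodicPt f (C.whiteDegree 0) 0 := by
    simpa using hf.isPeriodicPt_neg C.s_pos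
  suffices h : Function.minimalPeriod f 0 = C.whiteDegree 0 from h ▸ hm.minimalPeriod_dvd
  refine le_antisymm (hper.minimalPeriod_le (Nat.succ_pos _)) ?_
  rw [C.whiteDegree_zero]
  by_contra! hlt
  refine hne _ (hper.minimalPeriod_pos (Nat.succ_pos _)) (Nat.le_of_lt_succ hlt) ?_
  rw [← hf.iterate_zero (Nat.le_of_lt_succ hlt)]
  exact Function.isPeriodicPt_minimalPeriod f 0

theorem exists_E_v_add_one_eq (hinj : Function.Injective f) (h3k : 3 * k ≤ d)
    (hstep : ∀ i ≤ C.v C.s, C.E (i + 1) < C.E i + k)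
    (hne : ∀ i, 0 < i → i ≤ C.v 1 → (C.E i : ZMod k) ≠ 0) :
    ∃ j, 0 < j ∧ j < C.s ∧ C.E (C.v j + 1) = k ∧ C.whiteDegree j = C.whiteDegree 0 := by
  have hlt := hf.E_v_one_lt hstep hne
  obtain ⟨j, hj, i, hji, hij, hi⟩ := hf.exists_E_eq_of_natCast_eq_zero (C.E_one_ne_zero hstep)
    (Nat.zero_lt_of_lt hlt) (C.le_E_last h3k) (ZMod.natCast_self k)
  have hi0 : (C.E i : ZMod k) = 0 := by rw [hi, ZMod.natCast_self]
  have hj0 : 0 < j := by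
    by_contra! h
    obtain rfl := Nat.le_zero.1 h
    exact hne i (by omega) hij hi0
  have hdeg : C.whiteDegree 0 ∣ C.whiteDegree j :=
    hf.whiteDegree_zero_dvd hne (hi0 ▸ hf.isPeriodicPt_E hj hji hij)
  have h1j : C.v 1 ≤ C.v j := C.v_strictMono.monotone hj0
  have hjs := C.v_succ_le hj
  refine ⟨j, hj0, hj, ?_, le_antisymm (C.whiteDegree_antitone hj0.le)
    (Nat.le_of_dvd (Nat.succ_pos _) hdeg)⟩
  rcases (show C.v j + 1 ≤ i from hji).eq_or_lt with h | h
  · rw [h, hi]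
  · have hpred : f (C.E (i - 1)) = 0 := by
      rw [hf.step j hj (i - 1) (by omega) (by omega), Nat.sub_add_cancel (by omega), hi0]
    have hlt' : C.E (i - 1) < k := hi ▸ C.E_lt_E (by omega) (by omega)
    have heq := eq_of_natCast_zmod_eq (hinj (hpred.trans hf.apply_E_v_one.symm))
      (by omega) (by omega)
    have := C.E_lt_E (show C.v 1 < i - 1 by omega) (by omega)
    omega

theorem E_v_one_add_one_eq (hinj : Function.Injective f) (h3k : 3 * k ≤ d)
    (hstep : ∀ i ≤ C.v C.s, C.E (i + 1) < C.E i + k)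
    (hne : ∀ i, 0 < i → i ≤ C.v 1 → (C.E i : ZMod k) ≠ 0) :
    1 < C.s ∧ C.E (C.v 1 + 1) = k ∧ C.E (C.v 1) + 1 = k ∧ C.v 2 = 2 * C.v 1 := by
  obtain ⟨j, hj0, hj, hjk, hdeg⟩ := hf.exists_E_v_add_one_eq hinj h3k hstep hne
  have hv := fun l => C.v_eq_mul_of_whiteDegree_eq hdeg (l := l)
  have hsub : k ≤ C.E (C.v 1) + j := by
    have hneg : (-j : ZMod k) = C.E (C.v 1) :=
      hinj (by rw [hf.first j hj, hjk, ZMod.natCast_self, hf.apply_E_v_one])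
    refine Nat.le_of_dvd (by omega) ((ZMod.natCast_eq_zero_iff _ _).1 ?_)
    rw [Nat.cast_add, ← hneg, neg_add_cancel]
  obtain ⟨m, rfl⟩ := Nat.exists_eq_add_one.2 hj0
  have hvm : C.v 1 + 2 * m ≤ C.v (m + 1) := by
    rw [hv _ (Nat.le_succ _), add_mul, one_mul, mul_comm, add_comm]
    exact Nat.add_le_add_right (Nat.mul_le_mul_left m C.two_le_v_one) _
  have hadd := C.E_add_le (i := C.v 1) (m := C.v (m + 1) + 1 - C.v 1)
    (by have := C.v_succ_le hj; have := C.v_lt_succ (m + 1); omega)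
  rw [Nat.add_sub_cancel' (by omega), hjk] at hadd
  obtain rfl : m = 0 := by omega
  exact ⟨hj, hjk, by omega, hv 2 le_rfl⟩

theorem E_eq_mul_of_E_ne_zero (hinj : Function.Injective f) (h3k : 3 * k ≤ d)
    (hstep : ∀ i ≤ C.v C.s, C.E (i + 1) < C.E i + k)
    (hne : ∀ i, 0 < i → i ≤ C.v 1 → (C.E i : ZMod k) ≠ 0) {i : ℕ} (hi : i ≤ C.v 1) :
    C.E i = i * C.E 1 := by
  obtain ⟨hs, hk, -, hv2⟩ := hf.E_v_one_add_one_eq hinj h3k hstep hne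
  have h2s : C.v 2 ≤ C.v C.s := C.v_succ_le hs
  have h2 := C.two_le_v_one
  have hlt : C.v 1 + 1 < C.v C.s := by omega
  have hE := hf.E_succ_eq_add_E_one hstep hlt (by rw [hk, ZMod.natCast_self])
    (hf.step 1 hs _ (by omega) (show C.v 1 + 1 < C.v 2 by omega))
  exact C.E_eq_mul_of_le_step hlt
    (C.notMem_spine (Nat.lt_add_one _) (show C.v 1 + 1 < C.v 2 by omega)) (by omega) (by omega) hi

theorem exists_isPeriodicPt_zero_whiteDegree (hinj : Function.Injective f) (hkd : k ∣ d)
    (h3k : 3 * k ≤ d) (hstep : ∀ i ≤ C.v C.s, C.E (i + 1) < C.E i + k)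
    (hne : ∀ i, 0 < i → i ≤ C.v 1 → (C.E i : ZMod k) ≠ 0) :
    ∃ j, 2 ≤ j ∧ j < C.s ∧ Function.IsPeriodicPt f (C.whiteDegree j) 0 := by
  obtain ⟨hs, hk, hk1, hv2⟩ := hf.E_v_one_add_one_eq hinj h3k hstep hne
  have hE1 := C.E_one_lt hstep
  have hE1_pos := C.E_one_pos
  have hd := C.E_last
  rcases lt_or_ge (C.E (C.v C.s + 1)) (2 * k) with hlast | hlast
  · have hj0 : (-(d - 2 * k : ℕ) : ZMod k) = 0 := by
      rw [neg_eq_zero, ZMod.natCast_eq_zero_iff]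
      exact Nat.dvd_sub hkd (dvd_mul_left k 2)
    exact ⟨d - 2 * k, by omega, by omega, hj0 ▸ hf.isPeriodicPt_neg (by omega)⟩
  · have h2k : ((2 * k : ℕ) : ZMod k) = 0 := by simp
    obtain ⟨j, hj, i, hji, hij, hi⟩ := hf.exists_E_eq_of_natCast_eq_zero
      (C.E_one_ne_zero hstep) (by omega) hlast h2k
    have hi0 : (C.E i : ZMod k) = 0 := by rw [hi, h2k]
    refine ⟨j, ?_, hj, hi0 ▸ hf.isPeriodicPt_E hj hji hij⟩
    by_contra! hj2
    interval_cases j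
    · exact hne i (by omega) hij hi0
    · obtain ⟨r, rfl⟩ := Nat.exists_eq_add_of_lt hji
      have hr : C.v 1 + r < C.v 2 := hij
      have hiter := hf.iterate_neg hj hr
      rw [Function.iterate_succ_apply, hf.first 1 hj, hk, ZMod.natCast_self,
        hf.iterate_zero (by omega), hi0] at hiter
      rcases Nat.eq_zero_or_pos r with rfl | hr0
      · rw [add_zero, hk] at hi
        omega
      · exact hne r hr0 (by omega) hiter

theorem apply_neg_two (hinj : Function.Injective f) (h3k : 3 * k ≤ d)
    (hstep : ∀ i ≤ C.v C.s, C.E (i + 1) < C.E i + k)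
    (hne : ∀ i, 0 < i → i ≤ C.v 1 → (C.E i : ZMod k) ≠ 0) (hE1 : C.E 1 ≠ 1) :
    f (-(2 : ℕ)) = -(2 : ℕ) := by
  obtain ⟨-, -, hk1, -⟩ := hf.E_v_one_add_one_eq hinj h3k hstep hne
  have hE1_pos := C.E_one_pos
  have hneg2 : ((C.E (C.v 1) - 1 : ℕ) : ZMod k) = -(2 : ℕ) :=
    natCast_zmod_eq_neg (by have := C.E_pos C.v_one_pos C.v_one_le; omega)
  have hpred := hf.E_eq_mul_of_E_ne_zero hinj h3k hstep hne (Nat.sub_le (C.v 1) 1)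
  have hone := hf.E_eq_mul_of_E_ne_zero hinj h3k hstep hne le_rfl
  have hsucc : C.E (C.v 1) = C.E (C.v 1 - 1) + C.E 1 := by
    rw [hpred, hone, ← Nat.succ_mul, Nat.succ_eq_add_one, Nat.sub_add_cancel C.v_one_pos]
  rw [← hneg2]
  refine hf.apply_natCast_of_lt_of_lt (i := C.v 1 - 1) (by have := C.v_one_le; omega)
    (by omega) ?_
  rw [Nat.sub_add_cancel C.v_one_pos]
  omega

theorem E_one_eq_one_of_E_ne_zero (hinj : Function.Injective f) (hkd : k ∣ d)
    (h3k : 3 * k ≤ d) (hstep : ∀ i ≤ C.v C.s, C.E (i + 1) < C.E i + k)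
    (hne : ∀ i, 0 < i → i ≤ C.v 1 → (C.E i : ZMod k) ≠ 0) : C.E 1 = 1 := by
  by_contra hE1
  obtain ⟨j, hj2, hj, hper⟩ := hf.exists_isPeriodicPt_zero_whiteDegree hinj hkd h3k hstep hne
  have hdeg : C.whiteDegree 0 ≤ C.whiteDegree 2 :=
    (Nat.le_of_dvd (Nat.succ_pos _) (hf.whiteDegree_zero_dvd hne hper)).trans
      (C.whiteDegree_antitone hj2)
  have hv := C.two_le_v_one
  have hv3 : C.v 2 + 1 < C.v 3 := by
    have : C.v 3 - C.v 2 + 1 = C.whiteDegree 2 := rfl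
    rw [C.whiteDegree_zero] at hdeg
    omega
  have hfixed := hf.apply_neg_two hinj h3k hstep hne hE1
  have hEv2 : (C.E (C.v 2 + 1) : ZMod k) = -(2 : ℕ) := (hf.first 2 (by omega)).symm.trans hfixed
  have hstep2 := hf.step 2 (by omega) (C.v 2 + 1) (Nat.lt_add_one _) hv3
  rw [hEv2, hfixed, ← hEv2] at hstep2
  have hv3s : C.v 3 ≤ C.v C.s := C.v_succ_le (show 2 < C.s by omega)
  have hlt := C.E_lt_E (Nat.lt_add_one (C.v 2 + 1)) (by omega)
  have hlt' := hstep (C.v 2 + 1) (by omega)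
  exact hlt.ne (eq_of_natCast_zmod_eq hstep2 (by omega) (by omega))

theorem eq_add_one_of_E_ne_zero (hinj : Function.Injective f) (hkd : k ∣ d)
    (h3k : 3 * k ≤ d) (hstep : ∀ i ≤ C.v C.s, C.E (i + 1) < C.E i + k)
    (hne : ∀ i, 0 < i → i ≤ C.v 1 → (C.E i : ZMod k) ≠ 0) (z : ZMod k) : f z = z + 1 := by
  have hE1 := hf.E_one_eq_one_of_E_ne_zero hinj hkd h3k hstep hne
  have hE : ∀ i ≤ C.v 1, C.E i = i := fun i hi => by
    rw [hf.E_eq_mul_of_E_ne_zero hinj h3k hstep hne hi, hE1, mul_one]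
  obtain ⟨-, -, hk1, -⟩ := hf.E_v_one_add_one_eq hinj h3k hstep hne
  have : NeZero k := ⟨by omega⟩
  obtain ⟨x, -, hx, rfl⟩ := exists_natCast_zmod_eq 0 z
  rw [hE _ le_rfl] at hk1
  rcases (show x ≤ C.v 1 by omega).eq_or_lt with rfl | hlt
  · rw [← Nat.cast_add_one, hk1, ZMod.natCast_self]
    simpa only [hE _ le_rfl] using hf.apply_E_v_one
  · simpa only [hE _ hlt.le, hE _ hlt, Nat.cast_add_one] using hf.apply_E_of_lt_v_one hlt

theorem congr_or_eq_add_one (hinj : Function.Injective f) (hkd : k ∣ d) (hk : 1 < k)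
    (h3k : 3 * k ≤ d) :
    (∃ y, ∃ hy : y ∣ k, 1 < y ∧
      ∀ z, ZMod.castHom hy (ZMod y) (f z) = ZMod.castHom hy (ZMod y) z) ∨ ∀ z, f z = z + 1 := by
  have : NeZero k := ⟨by omega⟩
  by_cases hstep : ∀ i ≤ C.v C.s, C.E (i + 1) < C.E i + k
  · by_cases hne : ∀ i, 0 < i → i ≤ C.v 1 → (C.E i : ZMod k) ≠ 0
    · exact Or.inr (hf.eq_add_one_of_E_ne_zero hinj hkd h3k hstep hne)
    · push Not at hne
      obtain ⟨e, he0, he1, hE⟩ := hne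
      exact hf.congr_or_eq_add_one_of_E_eq_zero hstep he0 he1 hE
  · push Not at hstep
    obtain ⟨i, hi, hik⟩ := hstep
    exact Or.inl ⟨k, dvd_rfl, hk, fun z => by rw [hf.apply_eq_self_of_le_step hinj hi hik]⟩

end IsWhiteMap

/-! ### The two cycle types of a caterpillar -/

/-- The degree of the `i`-th black vertex: the edges `E i + 1, …, E (i + 1)` and, if `i` lies on the
spine, one edge `-j`. -/
noncomputable def blackDegree (i : ℕ) : ℕ :=
  open Classical in C.E (i + 1) - C.E i + if i ∈ C.spine then 1 else 0

theorem blackDegree_of_mem {i : ℕ} (hi : i ∈ C.spine) :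
    C.blackDegree i = C.E (i + 1) - C.E i + 1 := by
  rw [blackDegree, if_pos hi]

theorem blackDegree_of_notMem {i : ℕ} (hi : i ∉ C.spine) :
    C.blackDegree i = C.E (i + 1) - C.E i := by
  rw [blackDegree, if_neg hi, add_zero]

theorem sum_blackDegree : ∑ i ∈ Finset.range (C.v C.s + 1), C.blackDegree i = d := by
  classical
  have hcount : Nat.count (· ∈ C.spine) (C.v C.s + 1) = C.s := count_mem_range_succ C.v_strictMono _
  refine Eq.trans ?_ ((sum_sub_add_ite C.E_mono C.E_zero (· ∈ C.spine) _).trans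
    ((congrArg _ hcount).trans C.E_last))
  refine Finset.sum_congr rfl fun i _ => ?_
  unfold blackDegree
  congr

/-- The edges at the `j`-th non-leaf white vertex in cyclic order, for `r < whiteDegree j`. -/
def whitePoint (j r : ℕ) : ZMod d := if r = 0 then -j else C.E (C.v j + r)

theorem two_le_whiteDegree (j : ℕ) : 2 ≤ C.whiteDegree j := by
  have := C.v_lt_succ j
  unfold whiteDegree
  omega

theorem whitePoint_zero (j : ℕ) : C.whitePoint j 0 = -j := if_pos rfl

theorem whitePoint_of_pos {j r : ℕ} (hr : 0 < r) : C.whitePoint j r = C.E (C.v j + r) :=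
  if_neg hr.ne'

theorem E_add_s_le {i : ℕ} (hi : i ≤ C.v C.s) : C.E i + C.s ≤ d := by
  have := C.E_mono (hi.trans (Nat.le_add_right _ 1))
  have := C.E_last
  omega

theorem natCast_ne_neg {x j : ℕ} (hx : 0 < x) (hx' : x ≤ C.E (C.v C.s + 1)) (hj : j < C.s) :
    (x : ZMod d) ≠ -j := by
  intro h
  have := C.E_last
  refine natCast_zmod_ne_zero (k := d) (x := x + j) (by omega) (by omega) ?_
  rw [Nat.cast_add, h, neg_add_cancel]

theorem E_ne_neg {i j : ℕ} (hi0 : 0 < i) (hi : i ≤ C.v C.s) (hj : j < C.s) :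
    (C.E i : ZMod d) ≠ -j :=
  C.natCast_ne_neg (C.E_pos hi0 hi) (C.E_mono (hi.trans (Nat.le_add_right _ 1))) hj

theorem neg_natCast_inj {j j' : ℕ} (hj : j < C.s) (hj' : j' < C.s) (h : (-j : ZMod d) = -j') :
    j = j' := by
  have := C.E_last
  exact eq_of_natCast_zmod_eq (neg_inj.1 h) (by omega) (by omega)

theorem E_natCast_inj {i i' : ℕ} (hi : i ≤ C.v C.s) (hi' : i' ≤ C.v C.s)
    (h : (C.E i : ZMod d) = C.E i') : i = i' := by
  have := C.E_add_s_le hi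
  have := C.E_add_s_le hi'
  have := C.s_pos
  exact C.E_injOn hi hi' (eq_of_natCast_zmod_eq h (by omega) (by omega))

theorem whitePoint_injective :
    Function.Injective fun p : Σ j : Fin C.s, Fin (C.whiteDegree j) => C.whitePoint p.1 p.2 := by
  rintro ⟨⟨j, hj⟩, r, hr⟩ ⟨⟨j', hj'⟩, r', hr'⟩ h
  dsimp only at h
  unfold whiteDegree at hr hr'
  dsimp only at hr hr'
  have hle := C.v_succ_le hj
  have hle' := C.v_succ_le hj'
  rcases Nat.eq_zero_or_pos r with rfl | hr0 <;> rcases Nat.eq_zero_or_pos r' with rfl | hr0'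
  · rw [whitePoint_zero, whitePoint_zero] at h
    obtain rfl := C.neg_natCast_inj hj hj' h
    rfl
  · rw [whitePoint_zero, C.whitePoint_of_pos hr0'] at h
    exact (C.E_ne_neg (by omega) (by omega) hj h.symm).elim
  · rw [whitePoint_zero, C.whitePoint_of_pos hr0] at h
    exact (C.E_ne_neg (by omega) (by omega) hj' h).elim
  · rw [C.whitePoint_of_pos hr0, C.whitePoint_of_pos hr0'] at h
    have hadd := C.E_natCast_inj (by omega) (by omega) h
    obtain rfl : j = j' := by
      rcases lt_trichotomy j j' with hlt | rfl | hlt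
      · have := C.v_succ_le hlt
        omega
      · rfl
      · have := C.v_succ_le hlt
        omega
    obtain rfl : r = r' := by omega
    rfl

theorem whitePoint_ne_natCast {j r x : ℕ} (hj : j < C.s) (hr : r < C.whiteDegree j) (hx : 0 < x)
    (hx' : x ≤ C.E (C.v C.s + 1)) (hE : ∀ i ≤ C.v C.s, x ≠ C.E i) : C.whitePoint j r ≠ x := by
  rcases Nat.eq_zero_or_pos r with rfl | hr0
  · rw [whitePoint_zero]
    exact (C.natCast_ne_neg hx hx' hj).symm
  · rw [C.whitePoint_of_pos hr0]
    have hjs := C.v_succ_le hj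
    have hle : C.v j + r ≤ C.v C.s := by unfold whiteDegree at hr; omega
    have := C.E_add_s_le hle
    have := C.E_last
    have := C.s_pos
    exact fun h => hE _ hle (eq_of_natCast_zmod_eq h (by omega) (by omega)).symm

theorem isWhiteMap_of_apply_whitePoint {f : ZMod d → ZMod d}
    (happly : ∀ j < C.s, ∀ r < C.whiteDegree j,
      f (C.whitePoint j r) = C.whitePoint j ((r + 1) % C.whiteDegree j))
    (hfix : ∀ y, (∀ j < C.s, ∀ r < C.whiteDegree j, C.whitePoint j r ≠ y) → f y = y) :
    C.IsWhiteMap f where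
  first j hj := by
    have h := happly j hj 0 (Nat.succ_pos _)
    rwa [whitePoint_zero, Nat.mod_eq_of_lt (C.two_le_whiteDegree j),
      C.whitePoint_of_pos (Nat.succ_pos 0)] at h
  step j hj i hji hij := by
    obtain ⟨r, rfl⟩ := Nat.exists_eq_add_of_lt hji
    have h := happly j hj (r + 1) (by unfold whiteDegree; omega)
    rwa [C.whitePoint_of_pos r.succ_pos, Nat.mod_eq_of_lt (by unfold whiteDegree; omega),
      C.whitePoint_of_pos (Nat.succ_pos _)] at h
  last j hj := by
    have hlt := C.v_lt_succ j
    have h := happly j hj (C.v (j + 1) - C.v j) (Nat.lt_succ_self _)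
    rwa [C.whitePoint_of_pos (by omega), Nat.add_sub_cancel' hlt.le, ← whiteDegree, Nat.mod_self,
      whitePoint_zero] at h
  fixed x hx hx' hE := hfix x fun _ hj _ hr => C.whitePoint_ne_natCast hj hr hx hx' hE

theorem exists_isWhiteMap [NeZero d] : ∃ β : Equiv.Perm (ZMod d), C.IsWhiteMap β ∧
    β.cycleType = (Multiset.range C.s).map C.whiteDegree := by
  obtain ⟨β, hβ, hfix⟩ := exists_perm_of_cycles (fun j : Fin C.s => C.whiteDegree j)
    (fun j r => C.whitePoint j r) C.whitePoint_injective
  refine ⟨β, C.isWhiteMap_of_apply_whitePoint (fun j hj r hr => hβ ⟨j, hj⟩ r hr)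
    fun y hy => hfix y fun j r hr => hy j j.2 r hr, ?_⟩
  rw [cycleType_eq_of_cycles _ _ C.whitePoint_injective hβ hfix, univ_fin_val_map,
    Multiset.filter_eq_self]
  rintro x hx
  obtain ⟨j, -, rfl⟩ := Multiset.mem_map.1 hx
  exact C.two_le_whiteDegree j

namespace IsWhiteMap

variable {C} {α β : Equiv.Perm (ZMod d)} (hβ : C.IsWhiteMap β) (hαβ : ∀ x, α (β x) = x + 1)

include hβ hαβ

theorem apply_of_lt_of_lt {i x : ℕ} (hi : i ≤ C.v C.s) (hx : C.E i < x) (hx' : x < C.E (i + 1)) :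
    α x = x + 1 := by
  simpa only [hβ.apply_natCast_of_lt_of_lt hi hx hx'] using hαβ x

theorem pow_apply_E_add_one {i r : ℕ} (hi : i ≤ C.v C.s) (hr : C.E i + r < C.E (i + 1)) :
    (α ^ r) (C.E i + 1) = C.E i + 1 + r := by
  induction r with
  | zero => simp
  | succ r ih =>
    have h := hβ.apply_of_lt_of_lt hαβ (x := C.E i + 1 + r) hi (by omega) (by omega)
    rw [pow_succ', Equiv.Perm.mul_apply, ih (by omega)]
    push_cast at h ⊢
    rw [h, add_assoc]

theorem apply_neg {j : ℕ} (hj : j < C.s) : α (-j) = C.E (C.v (j + 1)) + 1 := by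
  rw [← hβ.last j hj, hαβ]

theorem apply_E_succ_of_notMem {i : ℕ} (hi : i ≤ C.v C.s) (hspine : i ∉ C.spine) :
    α (C.E (i + 1)) = C.E i + 1 := by
  rcases Nat.eq_zero_or_pos i with rfl | hi0
  · rw [← hβ.apply_E_of_lt_v_one C.v_one_pos, hαβ]
  · obtain ⟨j, hj, hji, hij⟩ := C.exists_v_lt_le hi0 hi
    have hij' : i < C.v (j + 1) := lt_of_le_of_ne hij fun h => hspine ⟨j, h.symm⟩
    rw [← hβ.step j hj i hji hij', hαβ]

theorem apply_E_v_add_one {j : ℕ} (hj : j < C.s)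
    (hlt : C.E (C.v (j + 1)) < C.E (C.v (j + 1) + 1)) : α (C.E (C.v (j + 1) + 1)) = -j := by
  rcases (show j + 1 ≤ C.s from hj).eq_or_lt with h | h
  · have hfix : β (C.E (C.v (j + 1) + 1)) = C.E (C.v (j + 1) + 1) := by
      rw [h] at hlt ⊢
      exact hβ.fixed _ (by omega) le_rfl fun i hi => (hlt.trans_le' (C.E_mono hi)).ne'
    have hlast := C.E_last
    have hα := hαβ (C.E (C.v (j + 1) + 1))
    rw [hfix] at hα
    rw [hα, ← Nat.cast_add_one]
    exact natCast_zmod_eq_neg (by rw [h]; omega)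
  · rw [← hβ.first (j + 1) h, hαβ]
    push_cast
    ring

theorem pow_apply_E_v_add_one {j : ℕ} (hj : j < C.s) :
    (α ^ (C.E (C.v (j + 1) + 1) - C.E (C.v (j + 1)))) (C.E (C.v (j + 1)) + 1) = -j := by
  rcases (C.E_mono (Nat.le_add_right (C.v (j + 1)) 1)).eq_or_lt with h | h
  · have hjs : j + 1 = C.s := by
      by_contra hne
      have := C.v_strictMono (show j + 1 < C.s by omega)
      exact (C.E_lt_E (Nat.lt_add_one _) this).ne h
    have hlast := C.E_last
    rw [← hjs, ← h] at hlast
    rw [← h, Nat.sub_self, pow_zero, Equiv.Perm.one_apply, ← Nat.cast_add_one]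
    exact natCast_zmod_eq_neg (by omega)
  · obtain ⟨r, hr⟩ := Nat.exists_eq_add_of_lt h
    have hle := C.v_succ_le hj
    rw [show C.E (C.v (j + 1) + 1) - C.E (C.v (j + 1)) = r + 1 by omega, pow_succ',
      Equiv.Perm.mul_apply, hβ.pow_apply_E_add_one hαβ hle (by omega),
      ← hβ.apply_E_v_add_one hαβ hj h, hr]
    congr 1
    push_cast
    ring

theorem pow_blackDegree_apply {i : ℕ} (hi : i ≤ C.v C.s) :
    (α ^ C.blackDegree i) (C.E i + 1) = C.E i + 1 := by
  by_cases hspine : i ∈ C.spine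
  · obtain ⟨j, rfl⟩ := hspine
    have hj : j < C.s := C.v_strictMono.le_iff_le.1 hi
    rw [C.blackDegree_of_mem ⟨j, rfl⟩, pow_succ', Equiv.Perm.mul_apply,
      hβ.pow_apply_E_v_add_one hαβ hj, hβ.apply_neg hαβ hj]
  · have hlt : C.E i < C.E (i + 1) :=
      C.E_lt_E i.lt_succ_self (lt_of_le_of_ne hi fun h =>
        hspine ⟨C.s - 1, by dsimp only; rw [h, Nat.sub_add_cancel C.s_pos]⟩)
    obtain ⟨r, hr⟩ := Nat.exists_eq_add_of_lt hlt
    rw [C.blackDegree_of_notMem hspine, show C.E (i + 1) - C.E i = r + 1 by omega, pow_succ',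
      Equiv.Perm.mul_apply, hβ.pow_apply_E_add_one hαβ hi (by omega)]
    refine (congrArg α ?_).trans (hβ.apply_E_succ_of_notMem hαβ hi hspine)
    rw [hr]
    push_cast
    ring

theorem exists_pow_apply_eq [NeZero d] (y : ZMod d) :
    ∃ i ≤ C.v C.s, ∃ r < C.blackDegree i, (α ^ r) (C.E i + 1) = y := by
  obtain ⟨x, hx, hxd, rfl⟩ := exists_natCast_zmod_eq 1 y
  have hlast := C.E_last
  rcases le_or_gt x (C.E (C.v C.s + 1)) with hle | hgt
  · obtain ⟨i, hi, hix, hxi⟩ := exists_lt_le_succ (f := C.E) (by rwa [C.E_zero]) hle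
    obtain ⟨r, rfl⟩ := Nat.exists_eq_add_of_lt hix
    refine ⟨i, Nat.le_of_lt_succ hi, r, by unfold blackDegree; omega, ?_⟩
    rw [hβ.pow_apply_E_add_one hαβ (Nat.le_of_lt_succ hi) (by omega)]
    push_cast
    ring
  · have hj : d - x < C.s := by omega
    refine ⟨C.v (d - x + 1), C.v_succ_le hj, _, ?_,
      (hβ.pow_apply_E_v_add_one hαβ hj).trans (natCast_zmod_eq_neg (by omega)).symm⟩
    rw [C.blackDegree_of_mem ⟨_, rfl⟩]
    exact Nat.lt_succ_self _

theorem cycleType_eq_map_blackDegree [NeZero d] :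
    α.cycleType = ((Multiset.range (C.v C.s + 1)).map C.blackDegree).filter (2 ≤ ·) := by
  let x : Fin (C.v C.s + 1) → ℕ → ZMod d := fun i r => (α ^ r) (C.E i + 1)
  have hsurj : ∀ y, ∃ i : Fin (C.v C.s + 1), ∃ r < C.blackDegree i, x i r = y := fun y => by
    obtain ⟨i, hi, r, hr, h⟩ := hβ.exists_pow_apply_eq hαβ y
    exact ⟨⟨i, Nat.lt_succ_of_le hi⟩, r, hr, h⟩
  have hinj : Function.Injective fun p : Σ i : Fin (C.v C.s + 1), Fin (C.blackDegree i) =>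
      x p.1 p.2 := by
    refine ((Fintype.bijective_iff_surjective_and_card _).2 ⟨fun y => ?_, ?_⟩).1
    · obtain ⟨i, r, hr, h⟩ := hsurj y
      exact ⟨⟨i, r, hr⟩, h⟩
    · simp only [Fintype.card_sigma, Fintype.card_fin, ZMod.card]
      rw [Fin.sum_univ_eq_sum_range C.blackDegree, C.sum_blackDegree]
  rw [cycleType_eq_of_cycles _ _ hinj (fun i r hr => ?_) fun y hy => ?_, univ_fin_val_map]
  · rcases (show r + 1 ≤ C.blackDegree i from hr).eq_or_lt with h | h
    · rw [h, Nat.mod_self, ← Equiv.Perm.mul_apply, ← pow_succ', h,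
        hβ.pow_blackDegree_apply hαβ (Nat.le_of_lt_succ i.2)]
      rfl
    · rw [Nat.mod_eq_of_lt h, ← Equiv.Perm.mul_apply, ← pow_succ']
  · obtain ⟨i, r, hr, h⟩ := hsurj y
    exact (hy i r hr h).elim

end IsWhiteMap

end Caterpillar

/-! ### Existence of caterpillars -/

theorem le_apply_of_lt_card_filter_map_range {f : ℕ → ℕ} (hf : Antitone f) {a i n : ℕ}
    (h : i < (((Multiset.range n).map f).filter (a ≤ ·)).card) : a ≤ f i := by
  by_contra! hlt
  refine h.not_ge ?_
  calc (((Multiset.range n).map f).filter (a ≤ ·)).card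
      = ((Finset.range n).filter fun l => a ≤ f l).card := by
        rw [Multiset.filter_map, Multiset.card_map]; rfl
    _ ≤ (Finset.range i).card := Finset.card_le_card fun l hl => Finset.mem_range.2 <| by
        by_contra! hil
        exact (Finset.mem_filter.1 hl).2.not_gt ((hf hil).trans_lt hlt)
    _ = i := Finset.card_range i

theorem count_add_count_not (p : ℕ → Prop) [DecidablePred p] (n : ℕ) :
    Nat.count p n + Nat.count (fun l => ¬ p l) n = n := by
  simpa only [Nat.count_eq_card_filter_range, Finset.card_range]
    using Finset.card_filter_add_card_filter_not (s := Finset.range n) p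

theorem map_range_ite_count {X : Type*} (p : ℕ → Prop) [DecidablePred p] (n : ℕ) (f : ℕ → X) :
    (Multiset.range n).map (fun l =>
      if p l then f (Nat.count p l) else f (Nat.count p n + Nat.count (fun l => ¬ p l) l))
      = (Multiset.range n).map f := by
  conv_rhs => rw [← count_add_count_not p n, Multiset.range_add, Multiset.map_add,
    Multiset.map_map, ← map_count_filter_range p, ← map_count_filter_range (fun l => ¬ p l),
    Multiset.map_map, Multiset.map_map]
  conv_lhs => rw [← Multiset.filter_add_not p (Multiset.range n), Multiset.map_add]
  congr 1 <;> refine Multiset.map_congr rfl fun l hl => ?_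
  · exact if_pos (Multiset.of_mem_filter hl)
  · exact if_neg (Multiset.of_mem_filter (p := fun l => ¬ p l) hl)

theorem nu_filter_two_le (Q : Multiset ℕ) : nu (Q.filter (2 ≤ ·)) = nu Q := by
  have hzero : nu (Q.filter fun x => ¬ 2 ≤ x) = 0 := by
    refine Multiset.sum_eq_zero fun y hy => ?_
    obtain ⟨x, hx, rfl⟩ := Multiset.mem_map.1 hy
    have := Multiset.of_mem_filter hx
    omega
  conv_rhs => rw [← Multiset.filter_add_not (2 ≤ ·) Q]
  rw [nu, nu, Multiset.map_add, Multiset.sum_add]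
  exact (Nat.add_eq_left.2 hzero).symm

theorem exists_strictMono_map_eq_filter (Q : Multiset ℕ) :
    ∃ v : ℕ → ℕ, v 0 = 0 ∧ StrictMono v ∧ (Antitone fun j => v (j + 1) - v j) ∧
      (Multiset.range (Q.filter (2 ≤ ·)).card).map (fun j => v (j + 1) - v j + 1)
        = Q.filter (2 ≤ ·) := by
  obtain ⟨g, hg, hgQ⟩ := exists_antitone_range_map_eq (Q.filter (2 ≤ ·))
  let v : ℕ → ℕ := fun j => ∑ l ∈ Finset.range j, max (g l - 1) 1
  have hv : ∀ j, v (j + 1) = v j + max (g j - 1) 1 := fun j => Finset.sum_range_succ _ j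
  have hgap : ∀ j, v (j + 1) - v j = max (g j - 1) 1 := fun j => by
    rw [hv, Nat.add_sub_cancel_left]
  refine ⟨v, rfl, strictMono_nat_of_lt_succ fun j => ?_, ?_, ?_⟩
  · rw [hv]
    omega
  · simp only [hgap]
    exact fun i j h => max_le_max (Nat.sub_le_sub_right (hg h) 1) le_rfl
  · conv_rhs => rw [← hgQ]
    refine Multiset.map_congr rfl fun j hj => ?_
    have : 2 ≤ g j := Multiset.of_mem_filter (hgQ ▸ Multiset.mem_map_of_mem g hj)
    rw [hgap]
    omega

theorem exists_map_eq_antitone_on_not (p : ℕ → Prop) [DecidablePred p] {n : ℕ} (hn : p n)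
    {f : ℕ → ℕ} (hf : Antitone f) (hpos : ∀ l ≤ n, 1 ≤ f l)
    (htwo : ∀ l, l + 1 < Nat.count p (n + 1) → 2 ≤ f l) :
    ∃ b : ℕ → ℕ, (Multiset.range (n + 1)).map b = (Multiset.range (n + 1)).map f ∧
      (∀ l ≤ n, 1 ≤ b l) ∧ (∀ l < n, p l → 2 ≤ b l) ∧
      ∀ i i', i ≤ i' → ¬ p i → ¬ p i' → b i' ≤ b i := by
  refine ⟨_, map_range_ite_count p (n + 1) f, fun l hl => ?_, fun l hl hpl => ?_,
    fun i i' hii' hi hi' => ?_⟩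
  · split_ifs with hpl
    · exact hpos _ ((Nat.count_le p).trans hl)
    · refine hpos _ ?_
      have hlt : Nat.count (fun l => ¬ p l) l < Nat.count (fun l => ¬ p l) (n + 1) :=
        Nat.count_strict_mono hpl (Nat.lt_succ_of_le hl)
      have := count_add_count_not p (n + 1)
      omega
  · rw [if_pos hpl]
    refine htwo _ ?_
    rw [Nat.count_succ, if_pos hn]
    exact Nat.succ_lt_succ (Nat.count_strict_mono hpl hl)
  · rw [if_neg hi, if_neg hi']
    exact hf (Nat.add_le_add_left (Nat.count_monotone _ hii') _)

theorem exists_heights (p : ℕ → Prop) [DecidablePred p] {n : ℕ} (hn : p n) {f : ℕ → ℕ}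
    (hf : Antitone f) (hpos : ∀ l ≤ n, 1 ≤ f l)
    (htwo : ∀ l, l + 1 < Nat.count p (n + 1) → 2 ≤ f l) :
    ∃ E : ℕ → ℕ, E 0 = 0 ∧ Monotone E ∧ StrictMonoOn E (Set.Iic n) ∧
      (∀ i i', i ≤ i' → i' < n → ¬ p i → ¬ p i' → E (i' + 1) - E i' ≤ E (i + 1) - E i) ∧
      (Multiset.range (n + 1)).map (fun l => E (l + 1) - E l + if p l then 1 else 0)
        = (Multiset.range (n + 1)).map f := by
  obtain ⟨b, hbf, hb1, hb2, hb⟩ := exists_map_eq_antitone_on_not p hn hf hpos htwo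
  let E : ℕ → ℕ := fun i => ∑ l ∈ Finset.range i, (b l - if p l then 1 else 0)
  have hstep : ∀ i, E (i + 1) - E i = b i - if p i then 1 else 0 := fun i => by
    rw [Nat.sub_eq_iff_eq_add' (Finset.sum_le_sum_of_subset (Finset.range_mono i.le_succ))]
    exact Finset.sum_range_succ _ i
  refine ⟨E, rfl, fun i i' h => Finset.sum_le_sum_of_subset (Finset.range_mono h),
    strictMonoOn_of_lt_add_one Set.ordConnected_Iic fun i _ _ hi => ?_,
    fun i i' hii' _ hi hi' => ?_, ?_⟩
  · have hlt : i < n := Nat.lt_of_succ_le hi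
    have hpos : 0 < E (i + 1) - E i := by
      have := hb1 i hlt.le
      have := hb2 i hlt
      rw [hstep]
      split_ifs <;> grind
    omega
  · rw [hstep, hstep, if_neg hi, if_neg hi']
    exact hb i i' hii' hi hi'
  · rw [← hbf]
    refine Multiset.map_congr rfl fun l hl => ?_
    have := hb1 l (Nat.le_of_lt_succ (Multiset.mem_range.1 hl))
    rw [hstep, Nat.sub_add_cancel]
    split_ifs <;> omega

theorem exists_caterpillar {P Q : Multiset ℕ} (hpos : ∀ x ∈ P, 0 < x)
    (hcard : P.card = nu Q + 1) (hQ : ∃ q ∈ Q, 3 ≤ q)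
    (hle : (Q.filter (2 ≤ ·)).card ≤ (P.filter (2 ≤ ·)).card + 1) :
    ∃ C : Caterpillar P.sum, (Multiset.range (C.v C.s + 1)).map C.blackDegree = P ∧
      (Multiset.range C.s).map C.whiteDegree = Q.filter (2 ≤ ·) := by
  classical
  obtain ⟨v, hv0, hv, hconc, hvQ⟩ := exists_strictMono_map_eq_filter Q
  obtain ⟨f, hf, hfP⟩ := exists_antitone_range_map_eq P
  set s := (Q.filter (2 ≤ ·)).card with hs
  obtain ⟨q, hqQ, hq⟩ := hQ
  have hvs : v s = nu Q := by
    rw [← nu_filter_two_le, ← hvQ, nu, Multiset.map_map]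
    exact ((Finset.sum_range_tsub hv.monotone s).trans (by rw [hv0, Nat.sub_zero])).symm
  have hq_mem : q ∈ Q.filter (2 ≤ ·) := Multiset.mem_filter.2 ⟨hqQ, by omega⟩
  have hs0 : 0 < s := Multiset.card_pos_iff_exists_mem.2 ⟨q, hq_mem⟩
  have hv1 : 2 ≤ v 1 := by
    obtain ⟨j, -, rfl⟩ := Multiset.mem_map.1 (hvQ ▸ hq_mem)
    have h : v (j + 1) - v j ≤ v 1 - v 0 := hconc j.zero_le
    omega
  rw [hcard, ← hvs] at hfP
  have hcount := count_mem_range_succ hv s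
  have hvs_mem : v s ∈ Set.range fun j => v (j + 1) :=
    ⟨s - 1, congrArg v (Nat.sub_add_cancel hs0)⟩
  obtain ⟨E, hE0, hE, hE_strict, hE_step, hEf⟩ := exists_heights
    (· ∈ Set.range fun j => v (j + 1)) hvs_mem hf
    (fun l hl => hpos _ (hfP ▸ Multiset.mem_map_of_mem f (Multiset.mem_range.2 (by omega))))
    (fun l hl => le_apply_of_lt_card_filter_map_range hf (by rw [hfP]; omega))
  rw [hfP] at hEf
  have hlast : E (v s + 1) + s = P.sum := by
    conv_rhs => rw [← hEf]
    exact ((sum_sub_add_ite hE hE0 _ _).trans (congrArg _ hcount)).symm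
  refine ⟨⟨s, v, E, hs0, hv0, hv, hv1, hconc, hE0, hE, hE_strict, hlast, hE_step⟩, ?_, hvQ⟩
  refine (Multiset.map_congr rfl fun i _ => ?_).trans hEf
  unfold Caterpillar.blackDegree Caterpillar.spine
  congr

/-! ### Primitivity -/

section Primitivity

open MulAction Equiv

theorem isPreprimitive_of_addSubgroup_eq_bot_or_top {A : Type*} [AddCommGroup A]
    {G : Subgroup (Perm A)} (htrans : ∀ a, Equiv.addRight a ∈ G)
    (hG : ∀ Λ : AddSubgroup A, (∀ g ∈ G, ∀ x y, x - y ∈ Λ → g x - g y ∈ Λ) → Λ = ⊥ ∨ Λ = ⊤) :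
    IsPreprimitive G A := by
  have : IsPretransitive G A := ⟨fun x y => ⟨⟨_, htrans (y - x)⟩, add_sub_cancel x y⟩⟩
  refine IsPreprimitive.of_isTrivialBlock_base 0 fun {B} h0 hB => ?_
  have hstab : ∀ g ∈ G, ∀ x ∈ B, g x ∈ B → ∀ z ∈ B, g z ∈ B := fun g hg x hx hgx z hz => by
    rw [← hB.smul_eq_of_mem (g := ⟨g, hg⟩) hx hgx]
    exact Set.smul_mem_smul_set hz
  let Λ : AddSubgroup A :=
    { carrier := B
      zero_mem' := h0
      add_mem' := fun {x y} hx hy => hstab _ (htrans y) 0 h0 (by simpa using hy) x hx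
      neg_mem' := fun {x} hx => by
        simpa using hstab _ (htrans (-x)) x hx (by simpa using h0) 0 h0 }
  have hΛ : Λ = ⊥ ∨ Λ = ⊤ := hG Λ fun g hg x y hxy => by
    have h := hstab (Equiv.addRight (-g y) * g * Equiv.addRight y)
      (G.mul_mem (G.mul_mem (htrans _) hg) (htrans _)) 0 h0 (by simpa using h0) (x - y) hxy
    exact (sub_eq_add_neg (g x) (g y)).symm ▸ (by simpa using h : g x + -g y ∈ B)
  refine hΛ.imp (fun h => ?_) fun h => ?_
  · have : B = {0} := congrArg SetLike.coe h
    exact this ▸ Set.subsingleton_singleton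
  · exact congrArg SetLike.coe h

theorem exists_eq_ker_castHom {d : ℕ} (Λ : AddSubgroup (ZMod d)) :
    ∃ k, ∃ hk : k ∣ d, ∀ x, x ∈ Λ ↔ ZMod.castHom hk (ZMod k) x = 0 := by
  obtain ⟨a, ha⟩ := Int.subgroup_cyclic (Λ.comap (Int.castAddHom (ZMod d)))
  have hmem : ∀ n : ℤ, (n : ZMod d) ∈ Λ ↔ a ∣ n := fun n => by
    rw [← Int.mem_zmultiples_iff, AddSubgroup.zmultiples_eq_closure, ← ha]
    rfl
  have hd : a.natAbs ∣ d := Int.natAbs_dvd_natAbs.2 ((hmem d).1 (by simp))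
  refine ⟨a.natAbs, hd, fun x => ?_⟩
  obtain ⟨n, rfl⟩ := ZMod.intCast_surjective x
  rw [hmem, map_intCast, ZMod.intCast_zmod_eq_zero_iff_dvd, Int.natAbs_dvd]

theorem Caterpillar.IsWhiteMap.map {d k l : ℕ} {C : Caterpillar d} {f : ZMod k → ZMod k}
    {g : ZMod l → ZMod l} (hf : C.IsWhiteMap f) (φ : ZMod k →+* ZMod l)
    (hg : ∀ x, g (φ x) = φ (f x)) : C.IsWhiteMap g where
  first j hj := by simpa using (hg _).trans (congrArg φ (hf.first j hj))
  step j hj i hi hi' := by simpa using (hg _).trans (congrArg φ (hf.step j hj i hi hi'))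
  last j hj := by simpa using (hg _).trans (congrArg φ (hf.last j hj))
  fixed x hx hx' hne := by simpa using (hg _).trans (congrArg φ (hf.fixed x hx hx' hne))

theorem exists_injective_semiconj {X Y : Type*} [Finite Y] {π : X → Y}
    (hπ : Function.Surjective π) (β : Perm X) (hβ : ∀ x y, π x = π y → π (β x) = π (β y)) :
    ∃ f : Y → Y, Function.Injective f ∧ ∀ x, f (π x) = π (β x) := by
  have hf : ∀ x, Function.extend π (π ∘ β) id (π x) = π (β x) :=
    Function.FactorsThrough.extend_apply (fun x y h => hβ x y h) _
  refine ⟨_, Finite.injective_iff_surjective.2 fun y => ?_, hf⟩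
  obtain ⟨x, rfl⟩ := hπ y
  exact ⟨π (β.symm x), by rw [hf, apply_symm_apply]⟩

theorem Caterpillar.IsWhiteMap.eq_one_or_eq_of_congr {d : ℕ} (hd : Odd d) {C : Caterpillar d}
    [NeZero d] {α β : Perm (ZMod d)} (hβ : C.IsWhiteMap β) (hαβ : ∀ x, α (β x) = x + 1)
    (hgα : (fullCycleType α).gcd = 1) (hgβ : (fullCycleType β).gcd = 1) {k : ℕ} (hk : k ∣ d)
    (hcongr : ∀ x y, ZMod.castHom hk (ZMod k) x = ZMod.castHom hk (ZMod k) y →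
      ZMod.castHom hk (ZMod k) (β x) = ZMod.castHom hk (ZMod k) (β y)) :
    k = 1 ∨ k = d := by
  obtain ⟨m, rfl⟩ := hk
  by_contra! hne
  have hkm := Nat.odd_mul.1 hd
  have hk1 : 1 < k := lt_of_le_of_ne' hkm.1.pos hne.1
  have h3m : 3 ≤ m := by
    have hm1 : m ≠ 1 := by rintro rfl; exact hne.2 (mul_one k).symm
    obtain ⟨t, rfl⟩ := hkm.2
    omega
  have : NeZero k := ⟨by omega⟩
  have hk : k ∣ k * m := dvd_mul_right k m
  obtain ⟨f, hinj, hf⟩ := exists_injective_semiconj (ZMod.castHom_surjective hk) β hcongr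
  have h3k : 3 * k ≤ k * m := mul_comm k 3 ▸ Nat.mul_le_mul_left k h3m
  rcases (hβ.map _ hf).congr_or_eq_add_one hinj hk hk1 h3k with ⟨y, hy, hy1, hfy⟩ | hf1
  · refine hy1.not_ge (Nat.le_of_dvd one_pos (hgα ▸ dvd_gcd_fullCycleType
      (fun x => ZMod.castHom hy (ZMod y) (ZMod.castHom hk (ZMod k) x)) fun x => ?_))
    have hx := hfy (ZMod.castHom hk (ZMod k) (β.symm x))
    rw [hf, apply_symm_apply] at hx
    have hαx := hαβ (β.symm x)
    rw [apply_symm_apply] at hαx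
    simp only [hαx, map_add, map_one, hx]
  · refine hk1.not_ge (Nat.le_of_dvd one_pos (hgβ ▸ dvd_gcd_fullCycleType
      (ZMod.castHom hk (ZMod k)) fun x => ?_))
    rw [← hf, hf1]

theorem Caterpillar.IsWhiteMap.isPreprimitive_closure {d : ℕ} (hd : Odd d) {C : Caterpillar d}
    [NeZero d] {α β : Perm (ZMod d)} (hβ : C.IsWhiteMap β) (hαβ : α * β = Equiv.addRight 1)
    (hgα : (fullCycleType α).gcd = 1) (hgβ : (fullCycleType β).gcd = 1) :
    IsPreprimitive (Subgroup.closure {α, β}) (ZMod d) := by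
  have hα_mem : α ∈ Subgroup.closure {α, β} := Subgroup.subset_closure (Set.mem_insert _ _)
  have hβ_mem : β ∈ Subgroup.closure {α, β} := Subgroup.subset_closure (by simp)
  refine isPreprimitive_of_addSubgroup_eq_bot_or_top (fun a => ?_) fun Λ hΛ => ?_
  · have := pow_mem (mul_mem hα_mem hβ_mem) a.val
    rwa [hαβ, Equiv.nsmul_addRight, nsmul_one, ZMod.natCast_rightInverse] at this
  · obtain ⟨k, hk, hΛk⟩ := exists_eq_ker_castHom Λ
    have hk' := hβ.eq_one_or_eq_of_congr hd (fun x => congrArg (· x) hαβ) hgα hgβ hk fun x y h => by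
      rw [← sub_eq_zero, ← map_sub, ← hΛk] at h ⊢
      exact hΛ β hβ_mem x y h
    rcases hk' with rfl | rfl
    · exact Or.inr (eq_top_iff.2 fun x _ => (hΛk x).2 (Subsingleton.elim _ _))
    · refine Or.inl (eq_bot_iff.2 fun x hx => ?_)
      simpa using (hΛk x).1 hx

theorem subgroupPrimitive_of_isPreprimitive {Ω : Type*} {G : Subgroup (Perm Ω)}
    [IsPreprimitive G Ω] : SubgroupPrimitive G := by
  refine ⟨fun x y => ?_, fun Λ ⟨hne, hΛ⟩ => ?_⟩
  · obtain ⟨g, hg⟩ := exists_smul_eq G x y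
    exact ⟨g, g.2, hg⟩
  · have hblock : IsBlock G Λ := isBlock_iff_smul_eq_or_disjoint.2 fun g => hΛ g g.2
    exact (IsPreprimitive.isTrivialBlock_of_isBlock hblock).imp_left fun hsub =>
      Set.exists_eq_singleton_iff_nonempty_subsingleton.2 ⟨hne, hsub⟩

theorem isPreprimitive_of_permCongr_mem {X Y : Type*} (e : X ≃ Y) {G : Subgroup (Perm X)}
    {H : Subgroup (Perm Y)} (hGH : ∀ g ∈ G, e.permCongr g ∈ H) [IsPreprimitive G X] :
    IsPreprimitive H Y := by
  let φ : G → H := fun g => ⟨e.permCongr g, hGH g g.2⟩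
  let f : X →ₑ[φ] Y := ⟨e, fun g x => by
    change e (g.1 x) = e.permCongr g.1 (e x)
    simp⟩
  exact IsPreprimitive.of_surjective (f := f) e.surjective

/-- Two permutations of `Ω` of cycle types `P` and `Q` that generate a primitive group and whose
product has order dividing `|Ω|`; for odd `|Ω|` the product is then a square in that group. -/
def HasPrimitiveRealization (Ω : Type*) [Fintype Ω] [DecidableEq Ω] (P Q : Multiset ℕ) : Prop :=
  ∃ α β : Perm Ω, fullCycleType α = P ∧ fullCycleType β = Q ∧ (α * β) ^ Fintype.card Ω = 1 ∧
    IsPreprimitive (Subgroup.closure {α, β}) Ω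

namespace HasPrimitiveRealization

variable {X Y : Type*} [Fintype X] [DecidableEq X] [Fintype Y] [DecidableEq Y] {P Q : Multiset ℕ}

theorem symm (h : HasPrimitiveRealization X P Q) : HasPrimitiveRealization X Q P := by
  obtain ⟨α, β, hα, hβ, hpow, hprim⟩ := h
  refine ⟨β⁻¹, α⁻¹, by rw [fullCycleType_inv, hβ], by rw [fullCycleType_inv, hα], ?_, ?_⟩
  · rw [← mul_inv_rev, inv_pow, hpow, inv_one]
  · rwa [← Set.inv_singleton, ← Set.inv_insert, Subgroup.closure_inv, Set.pair_comm]

theorem congr (e : X ≃ Y) (h : HasPrimitiveRealization X P Q) : HasPrimitiveRealization Y P Q := by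
  obtain ⟨α, β, hα, hβ, hpow, hprim⟩ := h
  have htype : ∀ σ : Perm X, fullCycleType (e.permCongr σ) = fullCycleType σ := fun σ =>
    fullCycleType_eq_of_semiconj e fun x => by simp
  refine ⟨e.permCongr α, e.permCongr β, by rw [htype, hα], by rw [htype, hβ], ?_, ?_⟩
  · have := congrArg e.permCongrHom hpow
    rwa [map_pow, map_mul, map_one, Fintype.card_congr e] at this
  · have hle : Subgroup.closure {α, β} ≤ (Subgroup.closure {e.permCongr α, e.permCongr β}).comap
        e.permCongrHom.toMonoidHom := by
      rw [Subgroup.closure_le]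
      rintro _ (rfl | rfl)
      · exact Subgroup.subset_closure (Set.mem_insert _ _)
      · exact Subgroup.subset_closure (Set.mem_insert_of_mem _ rfl)
    exact isPreprimitive_of_permCongr_mem e hle

theorem exists_sq_eq (hX : Odd (Fintype.card X)) (h : HasPrimitiveRealization X P Q) :
    ∃ α β ω : Perm X, fullCycleType α = P ∧ fullCycleType β = Q ∧ ω ^ 2 = α * β ∧
      SubgroupTransitive (Subgroup.closure {α, β, ω}) ∧
      SubgroupPrimitive (Subgroup.closure {α, β, ω}) := by
  obtain ⟨α, β, hα, hβ, hpow, hprim⟩ := h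
  obtain ⟨m, hm⟩ := hX
  let ω := (α * β) ^ (m + 1)
  have hω : ω ^ 2 = α * β := by
    rw [← pow_mul, show (m + 1) * 2 = Fintype.card X + 1 by omega, pow_succ, hpow, one_mul]
  have hle : Subgroup.closure {α, β} ≤ Subgroup.closure {α, β, ω} :=
    Subgroup.closure_mono (by grind)
  have : IsPreprimitive (Subgroup.closure {α, β, ω}) X :=
    isPreprimitive_of_permCongr_mem (Equiv.refl X) hle
  have hprim' : SubgroupPrimitive (Subgroup.closure {α, β, ω}) :=
    subgroupPrimitive_of_isPreprimitive
  exact ⟨α, β, ω, hα, hβ, hω, hprim'.1, hprim'⟩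

end HasPrimitiveRealization

end Primitivity

section Partitions

variable {d : ℕ} {D P Q : Multiset ℕ}

theorem nu_cons (a : ℕ) (D : Multiset ℕ) : nu (a ::ₘ D) = a - 1 + nu D := by
  rw [nu, Multiset.map_cons, Multiset.sum_cons, nu]

theorem nu_add_card (hpos : ∀ x ∈ D, 0 < x) : nu D + D.card = D.sum := by
  induction D using Multiset.induction_on with
  | empty => rfl
  | cons a D ih =>
    have ha := hpos a (Multiset.mem_cons_self a D)
    have := ih fun x hx => hpos x (Multiset.mem_cons_of_mem hx)
    rw [nu_cons, Multiset.card_cons, Multiset.sum_cons]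
    omega

theorem filter_two_le_eq_replicate (hle : ∀ x ∈ D, x ≤ 2) :
    D.filter (2 ≤ ·) = Multiset.replicate (D.filter (2 ≤ ·)).card 2 :=
  Multiset.eq_replicate_card.2 fun x hx =>
    (hle x (Multiset.mem_of_mem_filter hx)).antisymm (Multiset.of_mem_filter hx)

theorem nu_eq_card_filter_two_le (hle : ∀ x ∈ D, x ≤ 2) : nu D = (D.filter (2 ≤ ·)).card := by
  rw [← nu_filter_two_le, filter_two_le_eq_replicate hle, nu, Multiset.map_replicate,
    Multiset.sum_replicate, Multiset.card_replicate, smul_eq_mul, Nat.mul_one]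

theorem nu_lt_card (hle : ∀ x ∈ D, x ≤ 2) (hgcd : D.gcd = 1) : nu D < D.card := by
  rw [nu_eq_card_filter_two_le hle]
  by_contra! hcard
  have hself := Multiset.eq_of_le_of_card_le (Multiset.filter_le _ D) hcard
  have hdvd : 2 ∣ D.gcd := Multiset.dvd_gcd.2 fun x hx =>
    (hle x hx).antisymm (Multiset.filter_eq_self.1 hself x hx) ▸ dvd_rfl
  omega

theorem eq_twosAndOne (hD : IsPartitionOf d D) (hle : ∀ x ∈ D, x ≤ 2) (hd : d = 2 * nu D + 1) :
    D = twosAndOne d := by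
  conv_lhs => rw [← filter_two_le_add_replicate_one hD.1, filter_two_le_eq_replicate hle,
    ← nu_eq_card_filter_two_le hle, Multiset.sum_replicate, hD.2, smul_eq_mul]
  rw [twosAndOne, show (d - 1) / 2 = nu D by omega, show d - nu D * 2 = 1 by omega,
    Multiset.replicate_one]

theorem hasPrimitiveRealization_zmod [NeZero d] (hd : Odd d) (hP : IsPartitionOf d P)
    (hQ : IsPartitionOf d Q) (hsum : nu P + nu Q = d - 1) (hgP : P.gcd = 1) (hgQ : Q.gcd = 1)
    (hQ3 : ∃ q ∈ Q, 3 ≤ q) (hle : (Q.filter (2 ≤ ·)).card ≤ (P.filter (2 ≤ ·)).card + 1) :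
    HasPrimitiveRealization (ZMod d) P Q := by
  obtain ⟨hPpos, rfl⟩ := hP
  have hcard : P.card = nu Q + 1 := by
    have := nu_add_card hPpos
    have := hd.pos
    omega
  obtain ⟨C, hPC, hQC⟩ := exists_caterpillar hPpos hcard hQ3 hle
  obtain ⟨β, hβ, hβtype⟩ := C.exists_isWhiteMap
  let α : Equiv.Perm (ZMod P.sum) := Equiv.addRight 1 * β⁻¹
  have hαβ : α * β = Equiv.addRight 1 := inv_mul_cancel_right _ β
  have hβQ : fullCycleType β = Q :=
    fullCycleType_eq_of_cycleType_eq hQ.1 (by rw [hQ.2, ZMod.card]) (hβtype.trans hQC)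
  have hαP : fullCycleType α = P :=
    fullCycleType_eq_of_cycleType_eq hPpos (ZMod.card _).symm (by
      rw [hβ.cycleType_eq_map_blackDegree fun x => congrArg (· x) hαβ, hPC])
  refine ⟨α, β, hαP, hβQ, ?_, hβ.isPreprimitive_closure hd hαβ (hαP.symm ▸ hgP) (hβQ.symm ▸ hgQ)⟩
  ext x
  simp [hαβ]

theorem hasPrimitiveRealization {Ω : Type*} [Fintype Ω] [DecidableEq Ω]
    (hΩ : Fintype.card Ω = d) (hd : Odd d) (hP : IsPartitionOf d P) (hQ : IsPartitionOf d Q)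
    (hsum : nu P + nu Q = d - 1) (hgP : P.gcd = 1) (hgQ : Q.gcd = 1)
    (hne : ¬ (P = twosAndOne d ∧ Q = twosAndOne d)) : HasPrimitiveRealization Ω P Q := by
  have : NeZero d := ⟨hd.pos.ne'⟩
  refine HasPrimitiveRealization.congr (X := ZMod d)
    (Fintype.equivOfCardEq (by rw [ZMod.card, hΩ])) ?_
  have hcardP := hP.2 ▸ nu_add_card hP.1
  have hcardQ := hQ.2 ▸ nu_add_card hQ.1
  have hd_pos := hd.pos
  have hPQ := hasPrimitiveRealization_zmod hd hP hQ hsum hgP hgQ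
  have hQP := hasPrimitiveRealization_zmod hd hQ hP (by omega) hgQ hgP
  have hfilterP := Multiset.card_le_card (P.filter_le (2 ≤ ·))
  have hfilterQ := Multiset.card_le_card (Q.filter_le (2 ≤ ·))
  have hlarge : ∀ D : Multiset ℕ, (∃ x ∈ D, 3 ≤ x) ∨ ∀ x ∈ D, x ≤ 2 := fun D => by grind
  rcases hlarge P with hP3 | hP2 <;> rcases hlarge Q with hQ3 | hQ2
  · rcases le_total (Q.filter (2 ≤ ·)).card (P.filter (2 ≤ ·)).card with h | h
    · exact hPQ hQ3 (by omega)
    · exact (hQP hP3 (by omega)).symm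
  · have := nu_eq_card_filter_two_le hQ2
    exact (hQP hP3 (by omega)).symm
  · have := nu_eq_card_filter_two_le hP2
    exact hPQ hQ3 (by omega)
  · have := nu_lt_card hP2 hgP
    have := nu_lt_card hQ2 hgQ
    exact absurd ⟨eq_twosAndOne hP hP2 (by omega), eq_twosAndOne hQ hQ2 (by omega)⟩ hne

end Partitions

theorem statement_8_general {Ω : Type*} [Fintype Ω] [DecidableEq Ω] (d : ℕ)
    (hcard : Fintype.card Ω = d) (hd : Odd d)
    (D₁ D₂ : Multiset ℕ) (hP1 : IsPartitionOf d D₁) (hP2 : IsPartitionOf d D₂)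
    (hsum : nu D₁ + nu D₂ = d - 1)
    (hg1 : D₁.gcd = 1) (hg2 : D₂.gcd = 1)
    (hne : ¬ (D₁ = twosAndOne d ∧ D₂ = twosAndOne d)) :
    ∃ α β ω : Equiv.Perm Ω, fullCycleType α = D₁ ∧ fullCycleType β = D₂ ∧
      ω ^ 2 = α * β ∧
      SubgroupTransitive (Subgroup.closure {α, β, ω}) ∧
      SubgroupPrimitive (Subgroup.closure {α, β, ω}) :=
  (hasPrimitiveRealization hcard hd hP1 hP2 hsum hg1 hg2 hne).exists_sq_eq (hcard ▸ hd)

/-- If `gcd(D₁) = gcd(D₂) = 1` and `𝒟 ≠ {[2,…,2,1],[2,…,2,1]}`, then there are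
`α ∈ D₁`, `β ∈ D₂` and `ω` with `ω² = αβ` such that `⟨α, β, ω⟩` is transitive and primitive. -/
theorem statement_8 {Ω : Type*} [Fintype Ω] [DecidableEq Ω] (d : ℕ)
    (hcard : Fintype.card Ω = d) (hd : Odd d) (hdpos : 0 < d)
    (D₁ D₂ : Multiset ℕ) (hP1 : IsPartitionOf d D₁) (hP2 : IsPartitionOf d D₂)
    (hsum : nu D₁ + nu D₂ = d - 1) (hord : nu D₂ ≤ nu D₁)
    (hg1 : D₁.gcd = 1) (hg2 : D₂.gcd = 1)
    (hne : ¬ (D₁ = twosAndOne d ∧ D₂ = twosAndOne d)) :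
    ∃ α β ω : Equiv.Perm Ω, fullCycleType α = D₁ ∧ fullCycleType β = D₂ ∧
      ω ^ 2 = α * β ∧
      SubgroupTransitive (Subgroup.closure {α, β, ω}) ∧
      SubgroupPrimitive (Subgroup.closure {α, β, ω}) := by
  exact statement_8_general d hcard hd D₁ D₂ hP1 hP2 hsum hg1 hg2 hne
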